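/- arXiv:alg-geom/9610006 — 2 statements merged into one kernel-verified Lean document; each statement's English description precedes it below -/
import Mathlib

section
/- Let k be a perfect field and I ⊆ k[x_0,...,x_n] a homogeneous unmixed radical ideal of projective dimension d ≥ 0. Then for all m ≥ 1, h_I(m) ≤ C(m + deg I + d, d+1) − C(m+d, d+1). -/
open MvPolynomial

/-- Integer-valued binomial coefficient `C(a, b)`, zero when `a < 0` or `a < b`. -/
def ichoose (a : ℤ) (b : ℕ) : ℤ := if a < 0 then 0 else (a.toNat).choose b

/-- The Hilbert function of a (homogeneous) ideal `I ⊆ k[x₀, …, xₙ]`: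
`m ↦ dim_k (k[x₀, …, xₙ]/I)_m`. -/
noncomputable def hilbF (k : Type*) [Field k] {n : ℕ}
    (I : Ideal (MvPolynomial (Fin (n+1)) k)) (m : ℕ) : ℕ :=
  Module.finrank k ((homogeneousSubmodule (Fin (n+1)) k m).map
    (Ideal.Quotient.mkₐ k I).toLinearMap)

open scoped Classical in
/-- The Hilbert polynomial of `I` (the polynomial agreeing with the Hilbert
function for all large `m`; junk value `0` if none exists). -/
noncomputable def hilbP (k : Type*) [Field k] {n : ℕ}
    (I : Ideal (MvPolynomial (Fin (n+1)) k)) : Polynomial ℚ :=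
  if h : ∃ P : Polynomial ℚ, ∀ᶠ m : ℕ in Filter.atTop,
      (hilbF k I m : ℚ) = P.eval (m : ℚ) then h.choose else 0

/-- The (algebraic) degree of a homogeneous ideal `I` of projective dimension
`d ≥ 0`: `d! · (leading coefficient of its Hilbert polynomial)`. -/
noncomputable def idealDeg (k : Type*) [Field k] {n : ℕ}
    (I : Ideal (MvPolynomial (Fin (n+1)) k)) : ℕ :=
  ⌊((hilbP k I).natDegree.factorial : ℚ) * (hilbP k I).leadingCoeff⌋₊

/-- The projective dimension of a homogeneous ideal `I` (of dimension `≥ 0`):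
the degree of its Hilbert polynomial. -/
noncomputable def idealDim (k : Type*) [Field k] {n : ℕ}
    (I : Ideal (MvPolynomial (Fin (n+1)) k)) : ℕ :=
  (hilbP k I).natDegree

/-- A homogeneous ideal: one containing all homogeneous components of its elements. -/
def IsHomogeneousIdeal {k : Type*} [Field k] {n : ℕ}
    (I : Ideal (MvPolynomial (Fin (n+1)) k)) : Prop :=
  ∀ f ∈ I, ∀ m : ℕ, homogeneousComponent m f ∈ I

/-- `I` is unmixed of projective dimension `d`: every associated prime `P` of
`k[x₀,…,xₙ]/I` satisfies `dim k[x₀,…,xₙ]/P = d + 1` (affine Krull dimension). -/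
def IsUnmixed (k : Type*) [Field k] {n : ℕ}
    (I : Ideal (MvPolynomial (Fin (n+1)) k)) (d : ℕ) : Prop :=
  ∀ P ∈ associatedPrimes (MvPolynomial (Fin (n+1)) k)
      (MvPolynomial (Fin (n+1)) k ⧸ I),
    ringKrullDim (MvPolynomial (Fin (n+1)) k ⧸ P) = ((d + 1 : ℕ) : WithBot (WithTop ℕ))

/-! Write `S = k[x₀, …, xₙ]/I`. When `k` is infinite, Noether normalization by linear forms makes
`S` a finite graded module over `A = k[y₀, …, y_d]`; as `I` is radical and unmixed, `S` is
torsion-free over `A`, hence generically free of some rank `ρ`. At a general point `q` of `ℙᵈ`,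
if the coordinates of `s ∈ S` of degree `m` in a generic basis all vanish at `q` to order `m + 1`,
then `sᴺ` vanishes to order `N(m + 1)` while having degree only `Nm`; for large `N` this forces
`sᴺ = 0`, and `s = 0` since `S` is reduced. These are `ρ · C(m + d, d)` linear conditions on `s`,
so `h_I(m) ≤ ρ · C(m + d, d)`. A free submodule of rank `ρ` bounds `h_I` from below, and comparing
with the leading term of the Hilbert polynomial gives `ρ ≤ deg I`. A finite field is perfect, so
base change to its algebraic closure preserves reducedness and the dimension of every component.
-/

open scoped TensorProduct

namespace HilbertBound

section GradedModule

open DirectSum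

variable {A M σ τ : Type*} [CommRing A] [AddCommGroup M] [Module A M] [SetLike σ A] [SetLike τ M]
  (𝒜 : ℕ → σ) (ℳ : ℕ → τ)

/-- A homogeneous basis of the graded module `M` after inverting the nonzero homogeneous element
`denom`: a linearly independent family whose span contains `denom • M`. -/
structure GenericBasis (ι : Type*) where
  vec : ι → M
  degree : ι → ℕ
  vec_mem : ∀ i, vec i ∈ ℳ (degree i)
  linearIndependent : LinearIndependent A vec
  denom : A
  denom_ne_zero : denom ≠ 0
  denomDegree : ℕ
  denom_mem : denom ∈ 𝒜 denomDegree
  denom_smul_mem_span : ∀ x : M, denom • x ∈ Submodule.span A (Set.range vec)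

namespace GenericBasis

variable {𝒜 ℳ} {ι : Type*} (b : GenericBasis 𝒜 ℳ ι)

/-- The coordinates of `denom • x` in the basis `vec`. -/
noncomputable def repr : M →ₗ[A] ι →₀ A :=
  b.linearIndependent.repr ∘ₗ
    LinearMap.codRestrict _ (LinearMap.lsmul A M b.denom) b.denom_smul_mem_span

theorem sum_repr_smul_vec [Fintype ι] (x : M) : ∑ i, b.repr x i • b.vec i = b.denom • x := by
  rw [← Finsupp.sum_fintype (b.repr x) (fun i c ↦ c • b.vec i) (by simp)]
  exact b.linearIndependent.linearCombination_repr ⟨b.denom • x, b.denom_smul_mem_span x⟩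

theorem repr_apply_eq_of_sum_smul_vec [Fintype ι] {x : M} {c : ι → A}
    (h : ∑ i, c i • b.vec i = b.denom • x) (i : ι) : b.repr x i = c i := by
  rw [← sum_repr_smul_vec] at h
  exact (Fintype.linearIndependent_iffₛ.1 b.linearIndependent _ _ h i).symm

theorem eq_zero_of_repr_eq_zero [Finite ι] [IsDomain A] [Module.IsTorsionFree A M] {x : M}
    (hx : ∀ i, b.repr x i = 0) : x = 0 := by
  have := Fintype.ofFinite ι
  have h := b.sum_repr_smul_vec x
  simp only [hx, zero_smul, Finset.sum_const_zero] at h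
  exact (smul_eq_zero.1 h.symm).resolve_left b.denom_ne_zero

end GenericBasis

theorem prod_smul_mem_of_span_eq_top {ι : Type*} [Fintype ι] {v : ι → M}
    (hv : Submodule.span A (Set.range v) = ⊤) {N : Submodule A M} {a : ι → A}
    (ha : ∀ i, a i • v i ∈ N) (x : M) : (∏ i, a i) • x ∈ N := by
  classical
  suffices Submodule.span A (Set.range v) ≤ N.comap (LinearMap.lsmul A M (∏ i, a i)) from
    this (hv ▸ Submodule.mem_top)
  rw [Submodule.span_le]
  rintro _ ⟨i, rfl⟩
  simp only [SetLike.mem_coe, Submodule.mem_comap, LinearMap.lsmul_apply]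
  rw [← Finset.prod_erase_mul _ _ (Finset.mem_univ i), mul_smul]
  exact N.smul_mem _ (ha i)

variable [AddSubmonoidClass σ A] [AddSubmonoidClass τ M]
  [GradedRing 𝒜] [Decomposition ℳ] [SetLike.GradedSMul 𝒜 ℳ]

theorem coe_decompose_smul_of_mem (a : A) {x : M} {j : ℕ} (hx : x ∈ ℳ j) (n : ℕ) :
    (decompose ℳ (a • x) n : M) = if j ≤ n then (decompose 𝒜 a (n - j) : A) • x else 0 := by
  induction a using Decomposition.inductionOn 𝒜 with
  | zero => simp
  | @homogeneous i a =>
    have hax : (a : A) • x ∈ ℳ (i + j) := SetLike.GradedSMul.smul_mem a.2 hx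
    by_cases hn : i + j = n
    · rw [← hn, decompose_of_mem_same ℳ hax, if_pos (Nat.le_add_left j i), Nat.add_sub_cancel,
        decompose_of_mem_same 𝒜 a.2]
    · rw [decompose_of_mem_ne ℳ hax hn]
      split_ifs
      · rw [decompose_of_mem_ne 𝒜 a.2 (by lia), zero_smul]
      · rfl
  | add a b ha hb =>
    rw [add_smul, decompose_add, decompose_add, DirectSum.add_apply, DirectSum.add_apply,
      AddMemClass.coe_add, AddMemClass.coe_add, ha, hb]
    split_ifs
    · rw [add_smul]
    · rw [add_zero]

theorem exists_decompose_ne_zero {x : M} (hx : x ≠ 0) : ∃ n, (decompose ℳ x n : M) ≠ 0 := by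
  classical
  contrapose! hx
  rw [← sum_support_decompose ℳ x, Finset.sum_eq_zero fun n _ ↦ hx n]

theorem exists_finset_isHomogeneousElem_span_eq_top [Module.Finite A M] :
    ∃ T : Finset M, (∀ t ∈ T, SetLike.IsHomogeneousElem ℳ t) ∧
      Submodule.span A (T : Set M) = ⊤ := by
  classical
  obtain ⟨T, hT⟩ := Module.Finite.fg_top (R := A) (M := M)
  refine ⟨T.biUnion fun t ↦ (decompose ℳ t).support.image fun n ↦ (decompose ℳ t n : M), ?_, ?_⟩
  · simp only [Finset.mem_biUnion, Finset.mem_image]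
    rintro _ ⟨t, -, n, -, rfl⟩
    exact ⟨n, Subtype.prop _⟩
  · rw [eq_top_iff, ← hT, Submodule.span_le]
    intro t ht
    rw [← sum_support_decompose ℳ t]
    exact Submodule.sum_mem _ fun n hn ↦ Submodule.subset_span
      (Finset.mem_biUnion.2 ⟨t, ht, Finset.mem_image_of_mem _ hn⟩)

theorem exists_homogeneous_smul_mem_span {ι : Type*} [Finite ι] {e : ι → M} {deg : ι → ℕ}
    (he : ∀ i, e i ∈ ℳ (deg i)) {a : A} (ha : a ≠ 0) {x : M} {j : ℕ} (hx : x ∈ ℳ j)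
    (hax : a • x ∈ Submodule.span A (Set.range e)) :
    ∃ b ≠ 0, SetLike.IsHomogeneousElem 𝒜 b ∧ b • x ∈ Submodule.span A (Set.range e) := by
  have := Fintype.ofFinite ι
  obtain ⟨c, hc⟩ := (Submodule.mem_span_range_iff_exists_fun A).1 hax
  obtain ⟨n, hn⟩ := exists_decompose_ne_zero 𝒜 ha
  refine ⟨_, hn, ⟨n, Subtype.prop _⟩, ?_⟩
  have hcomp : (decompose 𝒜 a n : A) • x = ∑ i, (decompose ℳ (c i • e i) (n + j) : M) := by
    rw [← AddSubmonoidClass.coe_finsetSum, ← DFinsupp.finsetSum_apply, ← decompose_sum, hc,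
      coe_decompose_smul_of_mem 𝒜 ℳ a hx, if_pos (Nat.le_add_left j n), Nat.add_sub_cancel]
  rw [hcomp]
  refine Submodule.sum_mem _ fun i _ ↦ ?_
  rw [coe_decompose_smul_of_mem 𝒜 ℳ (c i) (he i), ← ite_zero_smul]
  exact Submodule.smul_mem _ _ (Submodule.subset_span ⟨i, rfl⟩)

theorem exists_genericBasis [IsDomain A] [Module.Finite A M] :
    ∃ ρ : ℕ, Nonempty (GenericBasis 𝒜 ℳ (Fin ρ)) := by
  classical
  obtain ⟨T, hT, hspan⟩ := exists_finset_isHomogeneousElem_span_eq_top (A := A) ℳ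
  choose deg hdeg using fun t : T ↦ hT t t.2
  let v : T → M := Subtype.val
  obtain ⟨s, hs, hmax⟩ := exists_maximal_linearIndepOn A v
  let equiv := (Finite.equivFin s).symm
  let e : Fin (Nat.card s) → M := fun i ↦ v (equiv i)
  have hrange : Set.range e = v '' s := by
    rw [Set.image_eq_range]
    exact equiv.surjective.range_comp fun i : s ↦ v i
  have hdenom (i : T) : ∃ b ≠ 0, SetLike.IsHomogeneousElem 𝒜 b ∧
      b • v i ∈ Submodule.span A (Set.range e) := by
    obtain ⟨a, ha, hmem⟩ : ∃ a : A, a ≠ 0 ∧ a • v i ∈ Submodule.span A (v '' s) := by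
      by_cases hi : i ∈ s
      · exact ⟨1, one_ne_zero, (one_smul A (v i)).symm ▸ Submodule.subset_span ⟨i, hi, rfl⟩⟩
      · exact hmax i hi
    exact exists_homogeneous_smul_mem_span 𝒜 ℳ (fun i ↦ hdeg (equiv i)) ha (hdeg i)
      (hrange ▸ hmem)
  choose a ha hhom hmem using hdenom
  choose α hα using hhom
  exact ⟨_, ⟨{
    vec := e
    degree := fun i ↦ deg (equiv i)
    vec_mem := fun i ↦ hdeg (equiv i)
    linearIndependent := hs.comp equiv equiv.injective
    denom := ∏ i, a i
    denom_ne_zero := Finset.prod_ne_zero_iff.2 fun i _ ↦ ha i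
    denomDegree := ∑ i, α i
    denom_mem := SetLike.prod_mem_graded _ _ _ fun i _ ↦ hα i
    denom_smul_mem_span := prod_smul_mem_of_span_eq_top (v := v)
      (Subtype.range_coe.symm ▸ hspan) hmem }⟩⟩

variable {𝒜 ℳ} in
theorem GenericBasis.exists_repr_apply_mem {ι : Type*} [Finite ι]
    (b : GenericBasis 𝒜 ℳ ι) {x : M} {n : ℕ} (hx : x ∈ ℳ n) (i : ι) :
    ∃ j ≤ b.denomDegree + n, b.repr x i ∈ 𝒜 j := by
  have := Fintype.ofFinite ι
  set N := b.denomDegree + n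
  have hcomp : ∑ l, (decompose ℳ (b.repr x l • b.vec l) N : M) = b.denom • x := by
    have hdx : b.denom • x ∈ ℳ N := SetLike.GradedSMul.smul_mem b.denom_mem hx
    rw [← AddSubmonoidClass.coe_finsetSum, ← DFinsupp.finsetSum_apply, ← decompose_sum,
      sum_repr_smul_vec, decompose_of_mem_same ℳ hdx]
  simp_rw [fun l ↦ coe_decompose_smul_of_mem 𝒜 ℳ (b.repr x l) (b.vec_mem l) N,
    ← ite_zero_smul] at hcomp
  rw [b.repr_apply_eq_of_sum_smul_vec hcomp]
  split_ifs
  · exact ⟨N - b.degree i, Nat.sub_le _ _, Subtype.prop _⟩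
  · exact ⟨0, Nat.zero_le _, zero_mem _⟩

end GradedModule

section GradedAlgebra

variable {A S σ τ : Type*} [CommRing A] [CommRing S] [Algebra A S] [SetLike σ A] [SetLike τ S]
  {𝒜 : ℕ → σ} {𝒮 : ℕ → τ} {ι : Type*} (b : GenericBasis 𝒜 𝒮 ι)

namespace GenericBasis

theorem denom_mul_repr_mul [Fintype ι] (s t : S) (l : ι) :
    b.denom * b.repr (s * t) l = ∑ i, b.repr s i * b.repr (b.vec i * t) l := by
  have h : b.denom • (s * t) = ∑ i, b.repr s i • (b.vec i * t) := by
    simp_rw [← smul_mul_assoc, ← b.sum_repr_smul_vec, Finset.sum_mul]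
  simpa [map_sum, Finsupp.finsetSum_apply] using congrArg (fun x ↦ b.repr x l) h

section Valuation

variable [Finite ι] {v : AddValuation A ℕ∞} (hv : v b.denom = 0)
include hv

theorem le_valuation_repr_mul_right {s : S} {u : ℕ∞} (hs : ∀ i, u ≤ v (b.repr s i))
    (t : S) (l : ι) : u ≤ v (b.repr (s * t) l) := by
  have := Fintype.ofFinite ι
  rw [← zero_add (v _), ← hv, ← v.map_mul, denom_mul_repr_mul]
  refine v.map_le_sum fun i _ ↦ ?_
  rw [v.map_mul]
  exact (hs i).trans le_self_add

theorem add_le_valuation_repr_mul {s t : S} {u w : ℕ∞} (hs : ∀ i, u ≤ v (b.repr s i))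
    (ht : ∀ i, w ≤ v (b.repr t i)) (l : ι) : u + w ≤ v (b.repr (s * t) l) := by
  have := Fintype.ofFinite ι
  rw [← zero_add (v _), ← hv, ← v.map_mul, denom_mul_repr_mul]
  refine v.map_le_sum fun i _ ↦ ?_
  rw [v.map_mul, mul_comm (b.vec i)]
  exact add_le_add (hs i) (b.le_valuation_repr_mul_right hv ht _ l)

theorem nsmul_le_valuation_repr_pow {s : S} {u : ℕ∞} (hs : ∀ i, u ≤ v (b.repr s i))
    (q : ℕ) (l : ι) : q • u ≤ v (b.repr (s ^ q) l) := by
  induction q generalizing l with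
  | zero => simp
  | succ q ih =>
    rw [pow_succ, succ_nsmul]
    exact b.add_le_valuation_repr_mul hv ih hs l

-- Passing to the power `s ^ (denomDegree + 1)` makes the vanishing order outgrow the degree of the
-- coordinates, which exceeds `deg s` only by the constant `denomDegree`.
theorem eq_zero_of_lt_valuation_repr [IsDomain A] [Module.IsTorsionFree A S] [IsReduced S]
    [AddSubmonoidClass σ A] [AddSubmonoidClass τ S] [GradedRing 𝒜] [GradedRing 𝒮]
    [SetLike.GradedSMul 𝒜 𝒮] (hdeg : ∀ n, ∀ f ∈ 𝒜 n, f ≠ 0 → v f ≤ n)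
    {s : S} {m : ℕ} (hs : s ∈ 𝒮 m) (hval : ∀ i, ((m + 1 : ℕ) : ℕ∞) ≤ v (b.repr s i)) :
    s = 0 := by
  set q := b.denomDegree + 1
  have hsq : s ^ q ∈ 𝒮 (q * m) := SetLike.pow_mem_graded q hs
  refine eq_zero_of_pow_eq_zero (n := q) (b.eq_zero_of_repr_eq_zero fun l ↦ ?_)
  by_contra hne
  obtain ⟨j, hj, hmem⟩ := b.exists_repr_apply_mem hsq l
  have hle : q • ((m + 1 : ℕ) : ℕ∞) ≤ j :=
    (b.nsmul_le_valuation_repr_pow hv hval q l).trans (hdeg j _ hmem hne)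
  have hle' : q * (m + 1) ≤ j := by
    rwa [nsmul_eq_mul, ← Nat.cast_mul, Nat.cast_le] at hle
  lia

end Valuation

end GenericBasis

end GradedAlgebra

section HomogeneousPolynomial

theorem card_finsuppAntidiag_univ_fin_succ (d m : ℕ) :
    ((Finset.univ : Finset (Fin (d + 1))).finsuppAntidiag m).card = (m + d).choose d := by
  rw [Finset.card_finsuppAntidiag_nat_eq_choose, Finset.card_univ, Fintype.card_fin,
    show d + 1 + m - 1 = m + d by lia, Nat.choose_symm_add]

theorem finrank_homogeneousSubmodule (K : Type*) [CommRing K] [Nontrivial K] (d m : ℕ) :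
    Module.finrank K (homogeneousSubmodule (Fin (d + 1)) K m) = (m + d).choose d := by
  have hset : {f : Fin (d + 1) →₀ ℕ | f.degree = m} =
      ((Finset.univ : Finset (Fin (d + 1))).finsuppAntidiag m : Finset _) := by
    ext f
    simp [Finset.mem_finsuppAntidiag, Finsupp.degree_eq_sum]
  rw [homogeneousSubmodule_eq_finsupp_supported, hset,
    (AddMonoidAlgebra.supportedEquivFinsupp (R := K) (S := K) _).finrank_eq,
    Module.finrank_finsupp_self]
  simp [card_finsuppAntidiag_univ_fin_succ]

theorem eval_smul_of_isHomogeneous {R σ : Type*} [CommSemiring R] {F : MvPolynomial σ R} {N : ℕ}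
    (hF : F.IsHomogeneous N) (t : R) (z : σ → R) : eval (t • z) F = t ^ N * eval z F := by
  rw [eval_eq, eval_eq, Finset.mul_sum]
  refine Finset.sum_congr rfl fun β hβ ↦ ?_
  simp_rw [Pi.smul_apply, smul_eq_mul, mul_pow, Finset.prod_mul_distrib,
    Finset.prod_pow_eq_pow_sum, ← hF.degree_eq_sum_deg_support hβ]
  ring

variable {K : Type*} [Field K] {d : ℕ}

theorem exists_eval_cons_one_ne_zero [Infinite K] {F : MvPolynomial (Fin (d + 1)) K} {N : ℕ}
    (hF : F.IsHomogeneous N) (hF0 : F ≠ 0) :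
    ∃ q : Fin d → K, eval (Fin.cons 1 q : Fin (d + 1) → K) F ≠ 0 := by
  obtain ⟨z, hz⟩ : ∃ z, eval z (F * X 0) ≠ 0 := by
    contrapose! hF0
    have h : F * X 0 = 0 := MvPolynomial.funext fun z ↦ by rw [hF0 z, map_zero]
    exact (mul_eq_zero.1 h).resolve_right (X_ne_zero 0)
  rw [map_mul, eval_X] at hz
  have hz0 : z 0 ≠ 0 := right_ne_zero_of_mul hz
  have hscale : (Fin.cons 1 fun i ↦ (z 0)⁻¹ * z i.succ : Fin (d + 1) → K) = (z 0)⁻¹ • z := by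
    ext i
    cases i using Fin.cases <;> simp [hz0]
  refine ⟨fun i ↦ (z 0)⁻¹ * z i.succ, ?_⟩
  rw [hscale, eval_smul_of_isHomogeneous hF]
  exact mul_ne_zero (pow_ne_zero _ (inv_ne_zero hz0)) (left_ne_zero_of_mul hz)

/-- Dehomogenization in the chart `x₀ = 1`, translated so that the point `(1, q)` becomes the
origin. -/
noncomputable def dehomogenizeAt (q : Fin d → K) :
    MvPolynomial (Fin (d + 1)) K →ₐ[K] MvPolynomial (Fin d) K :=
  aeval (Fin.cons 1 fun i ↦ X i + C (q i))

theorem eval_dehomogenizeAt (q z : Fin d → K) (F : MvPolynomial (Fin (d + 1)) K) :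
    eval z (dehomogenizeAt q F) = eval (Fin.cons 1 (z + q) : Fin (d + 1) → K) F := by
  have h : (aeval z).comp (dehomogenizeAt q) =
      aeval (R := K) (Fin.cons 1 (z + q) : Fin (d + 1) → K) := by
    ext i
    cases i using Fin.cases <;> simp [dehomogenizeAt]
  simpa [aeval_eq_eval] using DFunLike.congr_fun h F

theorem dehomogenizeAt_ne_zero [Infinite K] (q : Fin d → K) {F : MvPolynomial (Fin (d + 1)) K}
    {N : ℕ} (hF : F.IsHomogeneous N) (hF0 : F ≠ 0) : dehomogenizeAt q F ≠ 0 := by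
  obtain ⟨z, hz⟩ := exists_eval_cons_one_ne_zero hF hF0
  rw [← sub_add_cancel z q, ← eval_dehomogenizeAt] at hz
  exact fun h ↦ hz (by rw [h, map_zero])

theorem totalDegree_dehomogenizeAt_le (q : Fin d → K) (F : MvPolynomial (Fin (d + 1)) K) :
    (dehomogenizeAt q F).totalDegree ≤ F.totalDegree := by
  rw [dehomogenizeAt, aeval_def, eval₂_eq]
  refine totalDegree_finsetSum_le fun β hβ ↦ ?_
  rw [algebraMap_eq]
  refine (totalDegree_mul _ _).trans ?_
  rw [totalDegree_C, zero_add]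
  refine (totalDegree_finsetProd _ _).trans (le_trans ?_ (le_totalDegree hβ))
  refine Finset.sum_le_sum fun i _ ↦ (totalDegree_pow _ _).trans ?_
  refine mul_le_of_le_one_right (Nat.zero_le _) ?_
  cases i using Fin.cases with
  | zero => simp
  | succ i =>
    rw [Fin.cons_succ]
    exact (totalDegree_add _ _).trans (by simp)

/-- The order of vanishing at the point `(1, q)`. -/
noncomputable def vanishingOrder (q : Fin d → K) :
    AddValuation (MvPolynomial (Fin (d + 1)) K) ℕ∞ :=
  AddValuation.of (fun F ↦ (dehomogenizeAt q F : MvPowerSeries (Fin d) K).order)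
    (by simp)
    (by
      rw [map_one, coe_one, ← not_ne_iff, MvPowerSeries.order_ne_zero_iff_constCoeff_eq_zero]
      simp)
    (fun F G ↦ by
      rw [map_add, coe_add]
      exact MvPowerSeries.min_order_le_add)
    (fun F G ↦ by rw [map_mul, coe_mul, MvPowerSeries.order_mul])

theorem vanishingOrder_apply (q : Fin d → K) (F : MvPolynomial (Fin (d + 1)) K) :
    vanishingOrder q F = (dehomogenizeAt q F : MvPowerSeries (Fin d) K).order := rfl

theorem vanishingOrder_eq_zero {q : Fin d → K} {F : MvPolynomial (Fin (d + 1)) K}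
    (hF : eval (Fin.cons 1 q : Fin (d + 1) → K) F ≠ 0) : vanishingOrder q F = 0 := by
  rw [← zero_add q, ← eval_dehomogenizeAt] at hF
  rwa [vanishingOrder_apply, ← not_ne_iff, MvPowerSeries.order_ne_zero_iff_constCoeff_eq_zero,
    ← MvPowerSeries.coeff_zero_eq_constantCoeff_apply, coeff_coe, ← constantCoeff_eq,
    ← MvPolynomial.eval_zero]

theorem vanishingOrder_le_of_isHomogeneous [Infinite K] (q : Fin d → K)
    {F : MvPolynomial (Fin (d + 1)) K} {N : ℕ} (hF : F.IsHomogeneous N) (hF0 : F ≠ 0) :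
    vanishingOrder q F ≤ N := by
  obtain ⟨β, hβ⟩ := ne_zero_iff.1 (dehomogenizeAt_ne_zero q hF hF0)
  calc vanishingOrder q F ≤ β.degree := MvPowerSeries.order_le (by rwa [coeff_coe])
    _ ≤ N := Nat.cast_le.2 <| (le_totalDegree (mem_support_iff.2 hβ)).trans <|
      (totalDegree_dehomogenizeAt_le q F).trans hF.totalDegree_le

-- The exponents of degree at most `m` in `d` variables are the tails of those of degree exactly
-- `m` in `d + 1` variables.
theorem succ_le_order_of_coeff_tail_eq_zero {R : Type*} [CommSemiring R] {m : ℕ}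
    {G : MvPolynomial (Fin d) R}
    (hG : ∀ f ∈ (Finset.univ : Finset (Fin (d + 1))).finsuppAntidiag m, coeff f.tail G = 0) :
    ((m + 1 : ℕ) : ℕ∞) ≤ (G : MvPowerSeries (Fin d) R).order := by
  refine MvPowerSeries.nat_le_order fun β hβ ↦ ?_
  rw [coeff_coe, ← Finsupp.tail_cons (m - β.degree) β]
  refine hG _ (Finset.mem_finsuppAntidiag.2 ⟨?_, Finset.subset_univ _⟩)
  rw [Fin.sum_univ_succ]
  simp only [Finsupp.cons_zero, Finsupp.cons_succ]
  rw [← Finsupp.degree_eq_sum]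
  lia

end HomogeneousPolynomial

namespace GenericBasis

variable {K : Type*} [Field K]

theorem sum_finrank_le_finrank {A M : Type*} [CommRing A] [Algebra K A] [AddCommGroup M]
    [Module K M] [Module A M] [IsScalarTower K A M] {𝒜 : ℕ → Submodule K A}
    {ℳ : ℕ → Submodule K M} [SetLike.GradedSMul 𝒜 ℳ] [∀ n, FiniteDimensional K (𝒜 n)]
    [∀ n, FiniteDimensional K (ℳ n)] {ι : Type*} [Fintype ι] (b : GenericBasis 𝒜 ℳ ι) {m : ℕ}
    (hm : ∀ i, b.degree i ≤ m) :
    ∑ i, Module.finrank K (𝒜 (m - b.degree i)) ≤ Module.finrank K (ℳ m) := by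
  let combine : (∀ i, 𝒜 (m - b.degree i)) →ₗ[K] M :=
    (Fintype.linearCombination A b.vec).restrictScalars K ∘ₗ
      LinearMap.pi fun i ↦ (𝒜 (m - b.degree i)).subtype ∘ₗ LinearMap.proj i
  have hmem (c) : combine c ∈ ℳ m := Submodule.sum_mem _ fun i _ ↦ by
    have h : (c i : A) • b.vec i ∈ ℳ (m - b.degree i + b.degree i) :=
      SetLike.GradedSMul.smul_mem (c i).2 (b.vec_mem i)
    rwa [Nat.sub_add_cancel (hm i)] at h
  have hinj : Function.Injective (combine.codRestrict (ℳ m) hmem) := by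
    refine (injective_iff_map_eq_zero _).2 fun c hc ↦ ?_
    have hsum : ∑ i, (c i : A) • b.vec i = 0 := congrArg Subtype.val hc
    exact funext fun i ↦ Subtype.ext (Fintype.linearIndependent_iff.1 b.linearIndependent _ hsum i)
  rw [← Module.finrank_pi_fintype]
  exact LinearMap.finrank_le_finrank_of_injective hinj

variable {S : Type*} [CommRing S] [Algebra K S] {d : ℕ} [Algebra (MvPolynomial (Fin (d + 1)) K) S]
  [IsScalarTower K (MvPolynomial (Fin (d + 1)) K) S] {𝒮 : ℕ → Submodule K S}
  {ι : Type*} [Fintype ι]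
  [SetLike.GradedSMul (homogeneousSubmodule (Fin (d + 1)) K) 𝒮]
  (b : GenericBasis (homogeneousSubmodule (Fin (d + 1)) K) 𝒮 ι)

include b

theorem exists_card_mul_choose_le_finrank [∀ m, FiniteDimensional K (𝒮 m)] :
    ∃ c : ℕ, ∀ m, c ≤ m → Fintype.card ι * (m - c + d).choose d ≤ Module.finrank K (𝒮 m) := by
  have (n : ℕ) : FiniteDimensional K (homogeneousSubmodule (Fin (d + 1)) K n) :=
    Module.Finite.iff_fg.2 (homogeneousSubmodule_fg _ _ n)
  have hle (i : ι) : b.degree i ≤ ∑ i, b.degree i :=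
    Finset.single_le_sum (fun _ _ ↦ Nat.zero_le _) (Finset.mem_univ i)
  refine ⟨∑ i, b.degree i, fun m hm ↦ ?_⟩
  calc Fintype.card ι * (m - ∑ i, b.degree i + d).choose d
      = ∑ _i : ι, (m - ∑ i, b.degree i + d).choose d := by simp
    _ ≤ ∑ i, (m - b.degree i + d).choose d :=
      Finset.sum_le_sum fun i _ ↦ Nat.choose_le_choose _ (by have := hle i; lia)
    _ = ∑ i, Module.finrank K (homogeneousSubmodule (Fin (d + 1)) K (m - b.degree i)) := by
      simp_rw [finrank_homogeneousSubmodule]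
    _ ≤ Module.finrank K (𝒮 m) := b.sum_finrank_le_finrank fun i ↦ (hle i).trans hm

attribute [local instance] MvPolynomial.gradedAlgebra

theorem finrank_le_card_mul_choose [Infinite K] [GradedAlgebra 𝒮] [IsReduced S]
    [Module.IsTorsionFree (MvPolynomial (Fin (d + 1)) K) S] (m : ℕ) :
    Module.finrank K (𝒮 m) ≤ Fintype.card ι * (m + d).choose d := by
  obtain ⟨q, hq⟩ := exists_eval_cons_one_ne_zero b.denom_mem b.denom_ne_zero
  let jet : 𝒮 m →ₗ[K] ι × (Finset.univ : Finset (Fin (d + 1))).finsuppAntidiag m → K :=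
    LinearMap.pi fun x ↦ lcoeff K x.2.1.tail ∘ₗ (dehomogenizeAt q).toLinearMap ∘ₗ
      (Finsupp.lapply x.1 ∘ₗ b.repr).restrictScalars K ∘ₗ (𝒮 m).subtype
  have hinj : Function.Injective jet := by
    refine (injective_iff_map_eq_zero _).2 fun s hs ↦ Subtype.ext ?_
    refine b.eq_zero_of_lt_valuation_repr (vanishingOrder_eq_zero hq)
      (fun n F ↦ vanishingOrder_le_of_isHomogeneous q) s.2 fun l ↦ ?_
    rw [vanishingOrder_apply]
    exact succ_le_order_of_coeff_tail_eq_zero fun f hf ↦ congrFun hs (l, ⟨f, hf⟩)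
  calc Module.finrank K (𝒮 m)
      ≤ Module.finrank K (ι × (Finset.univ : Finset (Fin (d + 1))).finsuppAntidiag m → K) :=
        LinearMap.finrank_le_finrank_of_injective hinj
    _ = Fintype.card ι * (m + d).choose d := by
      rw [Module.finrank_fintype_fun_eq_card, Fintype.card_prod, Fintype.card_coe,
        card_finsuppAntidiag_univ_fin_succ]

end GenericBasis

section NoetherNormalization

attribute [local instance] MvPolynomial.gradedAlgebra

theorem isIntegral_of_forall_isIntegralElem_aeval {K R S σ : Type*} [CommRing K] [CommRing R]
    [CommRing S] [Algebra K R] [Algebra K S] {y : σ → S}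
    (hy : (aeval y : MvPolynomial σ K →ₐ[K] S).toRingHom.IsIntegral) (f : R →ₐ[K] S)
    (hf : ∀ i, f.toRingHom.IsIntegralElem (y i)) : f.toRingHom.IsIntegral := by
  let _ : Algebra R S := f.toRingHom.toAlgebra
  have : IsScalarTower K R S := .of_algebraMap_eq fun a ↦ (f.commutes a).symm
  let z : σ → integralClosure R S := fun i ↦ ⟨y i, hf i⟩
  have hcomp : (algebraMap (integralClosure R S) S).comp
      (aeval z : MvPolynomial σ K →ₐ[K] integralClosure R S).toRingHom =
      (aeval y : MvPolynomial σ K →ₐ[K] S).toRingHom := by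
    ext <;> simp [z, ← IsScalarTower.algebraMap_apply]
  rw [← hcomp] at hy
  have : Algebra.IsIntegral (integralClosure R S) S := ⟨hy.tower_top⟩
  exact fun s ↦ isIntegral_trans (A := integralClosure R S) s (Algebra.IsIntegral.isIntegral s)

theorem natDegree_finSuccEquiv_le_of_isHomogeneous {R : Type*} [CommSemiring R] {r N : ℕ}
    {H : MvPolynomial (Fin (r + 1)) R} (hH : H.IsHomogeneous N) :
    (finSuccEquiv R r H).natDegree ≤ N :=
  (natDegree_finSuccEquiv H).trans_le ((degreeOf_le_totalDegree H 0).trans hH.totalDegree_le)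

theorem coeff_finSuccEquiv_of_isHomogeneous {R : Type*} [CommSemiring R] {r N : ℕ}
    {H : MvPolynomial (Fin (r + 1)) R} (hH : H.IsHomogeneous N) :
    (finSuccEquiv R r H).coeff N = C (eval (Fin.cons 1 0 : Fin (r + 1) → R) H) := by
  have hcoeff (i j : ℕ) (hij : i + j = N) :
      ((finSuccEquiv R r H).coeff i).IsHomogeneous j :=
    hH.finSuccEquiv_coeff_isHomogeneous i j hij
  have hlow (i : ℕ) (hi : i ∈ Finset.range N) :
      eval (0 : Fin r → R) ((finSuccEquiv R r H).coeff i) = 0 := by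
    have hi := Finset.mem_range.1 hi
    rw [eval_zero, constantCoeff_eq]
    exact (hcoeff i (N - i) (by lia)).coeff_eq_zero (by simp; lia)
  have htop := totalDegree_eq_zero_iff_eq_C.1
    (Nat.le_zero.1 (hcoeff N 0 (add_zero N)).totalDegree_le)
  rw [eval_eq_eval_mv_eval', Polynomial.eval_eq_sum_range' (n := N + 1) (by
      grw [Polynomial.natDegree_map_le, natDegree_finSuccEquiv_le_of_isHomogeneous hH]; lia)]
  simp only [Polynomial.coeff_map, one_pow, mul_one]
  rw [Finset.sum_range_succ, Finset.sum_eq_zero hlow, zero_add, eval_zero, constantCoeff_eq]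
  exact htop

variable {K S : Type*} [Field K] [CommRing S] [Algebra K S]

theorem isIntegralElem_aeval_of_aeval_cons_eq_zero {r N : ℕ} {s : S} {z : Fin r → S}
    {H : MvPolynomial (Fin (r + 1)) K} (hH : H.IsHomogeneous N)
    (hlead : eval (Fin.cons 1 0 : Fin (r + 1) → K) H ≠ 0)
    (hzero : aeval (Fin.cons s z : Fin (r + 1) → S) H = 0) :
    (aeval z : MvPolynomial (Fin r) K →ₐ[K] S).toRingHom.IsIntegralElem s := by
  set u := eval (Fin.cons 1 0 : Fin (r + 1) → K) H
  refine ⟨Polynomial.C (C u⁻¹) * finSuccEquiv K r H, ?_, ?_⟩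
  · refine Polynomial.monic_of_natDegree_le_of_coeff_eq_one N
      ((Polynomial.natDegree_C_mul_le _ _).trans
        (natDegree_finSuccEquiv_le_of_isHomogeneous hH)) ?_
    rw [Polynomial.coeff_C_mul, coeff_finSuccEquiv_of_isHomogeneous hH, ← map_mul,
      inv_mul_cancel₀ hlead, map_one]
  · have heval : (Polynomial.eval₂RingHom (aeval z : MvPolynomial (Fin r) K →ₐ[K] S).toRingHom
        s).comp (finSuccEquiv K r).toRingHom =
        (aeval (Fin.cons s z : Fin (r + 1) → S) : MvPolynomial (Fin (r + 1)) K →ₐ[K] S) := by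
      ext i
      · simp [finSuccEquiv_apply]
      · cases i using Fin.cases <;> simp [finSuccEquiv_X_zero, finSuccEquiv_X_succ]
    have h := (DFunLike.congr_fun heval H).trans hzero
    rw [Polynomial.eval₂_mul]
    exact mul_eq_zero_of_right _ h

variable (𝒮 : ℕ → Submodule K S) [GradedAlgebra 𝒮]

theorem aeval_mem_of_isHomogeneous {σ : Type*} {y : σ → S} (hy : ∀ i, y i ∈ 𝒮 1)
    {F : MvPolynomial σ K} {N : ℕ} (hF : F.IsHomogeneous N) : aeval y F ∈ 𝒮 N := by
  rw [aeval_def, eval₂_eq]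
  refine Submodule.sum_mem _ fun β hβ ↦ ?_
  rw [← Algebra.smul_def, hF.degree_eq_sum_deg_support hβ]
  refine Submodule.smul_mem _ _ ?_
  simpa using SetLike.prod_pow_mem_graded 𝒮 (fun _ ↦ 1) y β fun i _ ↦ hy i

theorem exists_isHomogeneous_aeval_eq_zero {σ : Type*} {y : σ → S} (hy : ∀ i, y i ∈ 𝒮 1)
    {F : MvPolynomial σ K} (hF : F ≠ 0) (hzero : aeval y F = 0) :
    ∃ N, ∃ G : MvPolynomial σ K, G.IsHomogeneous N ∧ G ≠ 0 ∧ aeval y G = 0 := by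
  let φ : homogeneousSubmodule σ K →ₐᵍ[K] 𝒮 := ⟨aeval y, aeval_mem_of_isHomogeneous 𝒮 hy⟩
  obtain ⟨N, hN⟩ := exists_decompose_ne_zero (homogeneousSubmodule σ K) hF
  refine ⟨N, _, (DirectSum.decompose (homogeneousSubmodule σ K) F N).2, hN, ?_⟩
  calc
    φ (DirectSum.decompose (homogeneousSubmodule σ K) F N) = DirectSum.decompose 𝒮 (φ F) N :=
      map_directSumDecompose (homogeneousSubmodule σ K) 𝒮 φ
    _ = 0 := by rw [show φ F = 0 from hzero, DirectSum.decompose_zero]; rfl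

/-- The linear change of coordinates `xᵢ ↦ xᵢ + qᵢ x₀` for `i > 0`, fixing `x₀`. -/
noncomputable def shear {r : ℕ} (q : Fin r → K) :
    MvPolynomial (Fin (r + 1)) K →ₐ[K] MvPolynomial (Fin (r + 1)) K :=
  aeval (Fin.cons (X 0) fun i ↦ X i.succ + C (q i) * X 0)

theorem isHomogeneous_shear {r N : ℕ} (q : Fin r → K) {F : MvPolynomial (Fin (r + 1)) K}
    (hF : F.IsHomogeneous N) : (shear q F).IsHomogeneous N := by
  refine one_mul N ▸ hF.aeval _ fun i ↦ ?_
  cases i using Fin.cases with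
  | zero => exact isHomogeneous_X K 0
  | succ i => exact (isHomogeneous_X K i.succ).add (isHomogeneous_C_mul_X (q i) 0)

theorem aeval_shear {r : ℕ} (q : Fin r → K) (y : Fin (r + 1) → S)
    (F : MvPolynomial (Fin (r + 1)) K) :
    aeval y (shear q F) =
      aeval (Fin.cons (y 0) fun i ↦ y i.succ + q i • y 0 : Fin (r + 1) → S) F := by
  rw [shear, ← AlgHom.comp_apply, comp_aeval]
  congr 2
  ext i
  cases i using Fin.cases <;> simp [Algebra.smul_def]

theorem exists_fewer_linear_forms_of_not_injective [Infinite K] {r : ℕ} {y : Fin (r + 1) → S}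
    (hy : ∀ i, y i ∈ 𝒮 1)
    (hint : (aeval y : MvPolynomial (Fin (r + 1)) K →ₐ[K] S).toRingHom.IsIntegral)
    (hinj : ¬ Function.Injective (aeval y : MvPolynomial (Fin (r + 1)) K →ₐ[K] S)) :
    ∃ z : Fin r → S, (∀ i, z i ∈ 𝒮 1) ∧
      (aeval z : MvPolynomial (Fin r) K →ₐ[K] S).toRingHom.IsIntegral := by
  rw [injective_iff_map_eq_zero] at hinj
  push Not at hinj
  obtain ⟨F₀, hF₀, hF₀_ne⟩ := hinj
  obtain ⟨N, F, hF, hF_ne, hFy⟩ := exists_isHomogeneous_aeval_eq_zero 𝒮 hy hF₀_ne hF₀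
  obtain ⟨q, hq⟩ := exists_eval_cons_one_ne_zero hF hF_ne
  let z : Fin r → S := fun i ↦ y i.succ - q i • y 0
  have hyz : (Fin.cons (y 0) fun i ↦ z i + q i • y 0 : Fin (r + 1) → S) = y := by
    ext i
    cases i using Fin.cases <;> simp [z]
  have hy₀ : (aeval z : MvPolynomial (Fin r) K →ₐ[K] S).toRingHom.IsIntegralElem (y 0) := by
    refine isIntegralElem_aeval_of_aeval_cons_eq_zero (isHomogeneous_shear q hF) ?_ ?_
    · rw [← coe_aeval_eq_eval, RingHom.coe_coe, aeval_shear]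
      simpa using hq
    · rw [aeval_shear]
      simpa [hyz] using hFy
  refine ⟨z, fun i ↦ (𝒮 1).sub_mem (hy _) ((𝒮 1).smul_mem _ (hy 0)),
    isIntegral_of_forall_isIntegralElem_aeval hint _ fun i ↦ ?_⟩
  cases i using Fin.cases with
  | zero => exact hy₀
  | succ i =>
    have hsucc : y i.succ = aeval z (X i : MvPolynomial _ K) + aeval z (C (q i)) * y 0 := by
      simp [z, Algebra.smul_def]
    rw [hsucc]
    exact (RingHom.isIntegralElem_map _).add _ ((RingHom.isIntegralElem_map _).mul _ hy₀)

theorem exists_noetherNormalization_linear_forms [Infinite K] [Nontrivial S] {n : ℕ}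
    {x : Fin n → S} (hx : ∀ i, x i ∈ 𝒮 1)
    (hgen : (aeval x : MvPolynomial (Fin n) K →ₐ[K] S).toRingHom.IsIntegral) :
    ∃ (r : ℕ) (y : Fin r → S), (∀ i, y i ∈ 𝒮 1) ∧
      Function.Injective (aeval y : MvPolynomial (Fin r) K →ₐ[K] S) ∧
      (aeval y : MvPolynomial (Fin r) K →ₐ[K] S).toRingHom.IsIntegral := by
  induction n with
  | zero =>
    refine ⟨0, x, hx, (injective_iff_map_eq_zero _).2 fun F hF ↦ ?_, hgen⟩
    rw [eq_C_of_isEmpty F, aeval_C, map_eq_zero] at hF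
    rw [eq_C_of_isEmpty F, hF, map_zero]
  | succ n ih =>
    by_cases hinj : Function.Injective (aeval x : MvPolynomial (Fin (n + 1)) K →ₐ[K] S)
    · exact ⟨n + 1, x, hx, hinj, hgen⟩
    · obtain ⟨z, hz, hzint⟩ := exists_fewer_linear_forms_of_not_injective 𝒮 hx hgen hinj
      exact ih hz hzint

end NoetherNormalization

section KrullDimension

theorem ringKrullDim_le_of_isIntegral (A B : Type*) [CommRing A] [CommRing B] [Algebra A B]
    [Algebra.IsIntegral A B] : ringKrullDim B ≤ ringKrullDim A := by
  refine Order.krullDim_le_of_strictMono (PrimeSpectrum.comap (algebraMap A B)) fun P Q hPQ ↦ ?_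
  obtain ⟨b, hb⟩ := Set.exists_of_ssubset
    (SetLike.coe_ssubset_coe.2 ((PrimeSpectrum.asIdeal_lt_asIdeal P Q).2 hPQ))
  exact Ideal.comap_lt_comap_of_integral_mem_sdiff hPQ.le hb (Algebra.IsIntegral.isIntegral b)

theorem exists_prime_comap_eq_of_isIntegral {A B : Type*} [CommRing A] [CommRing B] [Algebra A B]
    [Algebra.IsIntegral A B] (hinj : Function.Injective (algebraMap A B)) (P : Ideal A)
    [P.IsPrime] : ∃ Q : Ideal B, Q.IsPrime ∧ Q.comap (algebraMap A B) = P := by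
  obtain ⟨Q, -, hQ, hQP⟩ := Ideal.exists_ideal_over_prime_of_isIntegral (S := B) P ⊥ (by
    rw [← RingHom.ker_eq_comap_bot, (RingHom.injective_iff_ker_eq_bot _).1 hinj]
    exact bot_le)
  exact ⟨Q, hQ, hQP⟩

theorem le_ringKrullDim_of_isIntegral {A B : Type*} [CommRing A] [CommRing B] [Algebra A B]
    [Algebra.IsIntegral A B] (hinj : Function.Injective (algebraMap A B)) :
    ringKrullDim A ≤ ringKrullDim B := by
  refine iSup_le fun l ↦ ?_
  obtain ⟨Q, hQ, hQl⟩ := exists_prime_comap_eq_of_isIntegral hinj l.head.asIdeal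
  have : Q.LiesOver l.head.asIdeal := ⟨hQl.symm⟩
  obtain ⟨L, hL, -⟩ := Ideal.exists_ltSeries_of_hasGoingUp l Q
  rw [← hL]
  exact Order.LTSeries.length_le_krullDim L

theorem ringKrullDim_quotient_eq_of_isIntegral {A B : Type*} [CommRing A] [CommRing B]
    {f : A →+* B} (hf : f.IsIntegral) (Q : Ideal B) :
    ringKrullDim (B ⧸ Q) = ringKrullDim (A ⧸ Q.comap f) := by
  let _ : Algebra (A ⧸ Q.comap f) (B ⧸ Q) := (Ideal.quotientMap Q f le_rfl).toAlgebra
  have : Algebra.IsIntegral (A ⧸ Q.comap f) (B ⧸ Q) := ⟨hf.quotient⟩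
  exact le_antisymm (ringKrullDim_le_of_isIntegral _ _)
    (le_ringKrullDim_of_isIntegral Ideal.quotientMap_injective)

variable {A T : Type*} [CommRing A] [IsDomain A] [CommRing T] [Algebra A T]

theorem exists_minimalPrimes_comap_eq_bot [Algebra.IsIntegral A T]
    (hinj : Function.Injective (algebraMap A T)) :
    ∃ Q ∈ minimalPrimes T, Q.comap (algebraMap A T) = ⊥ := by
  obtain ⟨Q, hQ, hQ_bot⟩ := exists_prime_comap_eq_of_isIntegral hinj ⊥
  obtain ⟨Q₀, hQ₀, hle⟩ := Ideal.exists_minimalPrimes_le (J := Q) bot_le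
  exact ⟨Q₀, hQ₀, le_bot_iff.1 (hQ_bot ▸ Ideal.comap_mono hle)⟩

theorem ringKrullDim_eq_of_forall_minimalPrimes [Algebra.IsIntegral A T]
    (hinj : Function.Injective (algebraMap A T)) {e : WithBot ℕ∞}
    (hdim : ∀ Q ∈ minimalPrimes T, ringKrullDim (T ⧸ Q) = e) : ringKrullDim A = e := by
  obtain ⟨Q, hQ, hQ_bot⟩ := exists_minimalPrimes_comap_eq_bot hinj
  rw [← hdim Q hQ, ringKrullDim_quotient_eq_of_isIntegral (A := A) Algebra.IsIntegral.isIntegral,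
    hQ_bot, ringKrullDim_eq_of_ringEquiv (RingEquiv.quotientBot A)]

theorem comap_eq_bot_of_ringKrullDim_le [FiniteRingKrullDim A] [Algebra.IsIntegral A T]
    {Q : Ideal T} (hdim : ringKrullDim A ≤ ringKrullDim (T ⧸ Q)) :
    Q.comap (algebraMap A T) = ⊥ := by
  by_contra hne
  obtain ⟨a, haQ, ha⟩ := Submodule.exists_mem_ne_zero_of_ne_bot hne
  have hlt := ringKrullDim_succ_le_of_surjective (Ideal.Quotient.mk (Q.comap (algebraMap A T)))
    Ideal.Quotient.mk_surjective (mem_nonZeroDivisors_of_ne_zero ha)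
    (Ideal.Quotient.eq_zero_iff_mem.2 haQ)
  rw [← ringKrullDim_quotient_eq_of_isIntegral Algebra.IsIntegral.isIntegral] at hlt
  have hsucc : ringKrullDim A + 1 ≤ ringKrullDim A := (by gcongr : _ ≤ _).trans hlt
  have hbot := ringKrullDim_ne_bot (R := A)
  have htop := ringKrullDim_ne_top (R := A)
  generalize ringKrullDim A = e at hsucc hbot htop
  lift e to ℕ∞ using hbot
  lift e to ℕ using fun h ↦ htop (by rw [h]; rfl)
  norm_cast at hsucc
  lia

theorem isTorsionFree_of_forall_minimalPrimes_comap_eq_bot [IsReduced T]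
    (hmin : ∀ Q ∈ minimalPrimes T, Q.comap (algebraMap A T) = ⊥) : Module.IsTorsionFree A T := by
  refine .of_smul_eq_zero fun a s has ↦ or_iff_not_imp_left.2 fun ha ↦ ?_
  rw [Algebra.smul_def] at has
  have hs : s ∈ sInf (minimalPrimes T) := by
    refine Submodule.mem_sInf.2 fun Q hQ ↦ ?_
    refine (hQ.1.1.mem_or_mem (has ▸ Q.zero_mem)).resolve_left fun haQ ↦ ha ?_
    exact (Submodule.mem_bot A).1 (hmin Q hQ ▸ Ideal.mem_comap.2 haQ)
  rw [minimalPrimes, Ideal.sInf_minimalPrimes] at hs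
  exact (mem_nilradical.1 hs).eq_zero

end KrullDimension

section BaseChange

theorem trace_one_tmul {k : Type*} (S : Type*) {L : Type*} [CommRing k] [CommRing S] [CommRing L]
    [Algebra k S] [Algebra k L] [Module.Free k L] [Module.Finite k L] (a : L) :
    Algebra.trace S (S ⊗[k] L) (1 ⊗ₜ a) = algebraMap k S (Algebra.trace k L a) := by
  rw [Algebra.trace_apply, Algebra.trace_apply, ← LinearMap.trace_baseChange]
  congr 1
  ext
  simp

theorem trace_one_tmul_traceDual_mul {k S L ι : Type*} [Field k] [CommRing S] [Field L]
    [Algebra k S] [Algebra k L] [FiniteDimensional k L] [Algebra.IsSeparable k L] [Finite ι]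
    [DecidableEq ι] (b : Module.Basis ι k L) (j : ι) (x : S ⊗[k] L) :
    Algebra.trace S (S ⊗[k] L) ((1 ⊗ₜ b.traceDual j) * x) =
      (Algebra.TensorProduct.basis S b).repr x j := by
  have hcoord : Algebra.trace S (S ⊗[k] L) ∘ₗ LinearMap.mulLeft S (1 ⊗ₜ b.traceDual j) =
      (Algebra.TensorProduct.basis S b).coord j := by
    refine (Algebra.TensorProduct.basis S b).ext fun i ↦ ?_
    simp [trace_one_tmul, Module.Basis.trace_traceDual_mul, Finsupp.single_apply, eq_comm]
  exact DFunLike.congr_fun hcoord x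

theorem isReduced_tensorProduct_of_isSeparable (k S L : Type*) [Field k] [CommRing S] [Field L]
    [Algebra k S] [Algebra k L] [IsReduced S] [FiniteDimensional k L] [Algebra.IsSeparable k L] :
    IsReduced (S ⊗[k] L) := by
  classical
  refine ⟨fun x hx ↦ ?_⟩
  let b := Module.finBasis k L
  refine (Algebra.TensorProduct.basis S b).ext_elem fun j ↦ ?_
  rw [← trace_one_tmul_traceDual_mul, map_zero, Finsupp.zero_apply]
  exact (Algebra.isNilpotent_trace_of_isNilpotent
    ((Commute.all _ _).isNilpotent_mul_left hx)).eq_zero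

theorem isReduced_tensorProduct_of_perfectField (k K S : Type*) [Field k] [PerfectField k]
    [Field K] [CommRing S] [Algebra k K] [Algebra k S] [Algebra.IsAlgebraic k K] [IsReduced S] :
    IsReduced (K ⊗[k] S) := by
  have : IsReduced (S ⊗[k] K) := by
    refine IsReduced.tensorProduct_of_flat_of_forall_fg fun B hB ↦ ?_
    have : Algebra.IsIntegral k B := .of_injective B.val Subtype.val_injective
    let _ : Field B := (isField_of_isIntegral_of_isField' (Field.toIsField k)).toField
    have : Algebra.FiniteType k B := (Subalgebra.fg_iff_finiteType B).1 hB
    have : Module.Finite k B := Algebra.IsIntegral.finite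
    exact isReduced_tensorProduct_of_isSeparable k S B
  exact isReduced_of_injective _ (Algebra.TensorProduct.comm k K S).injective

theorem comap_mem_minimalPrimes_of_flat {A B : Type*} [CommRing A] [CommRing B] {f : A →+* B}
    (hf : f.Flat) {Q : Ideal B} (hQ : Q ∈ minimalPrimes B) : Q.comap f ∈ minimalPrimes A := by
  have hQ_prime := hQ.1.1
  refine ⟨⟨hQ_prime.comap f, bot_le⟩, fun P hP hle ↦ ?_⟩
  let q : PrimeSpectrum B := ⟨Q, hQ_prime⟩
  let p : PrimeSpectrum A := ⟨P, hP.1⟩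
  have hpq : p ⤳ PrimeSpectrum.comap f q := (PrimeSpectrum.le_iff_specializes _ _).1 hle
  obtain ⟨Q', hQ', hQ'P⟩ := hf.generalizingMap_comap hpq
  have hQ'_le : Q'.asIdeal ≤ Q := (PrimeSpectrum.le_iff_specializes _ _).2 hQ'
  calc
    Q.comap f ≤ Q'.asIdeal.comap f := Ideal.comap_mono (hQ.2 ⟨Q'.2, bot_le⟩ hQ'_le)
    _ = P := congrArg PrimeSpectrum.asIdeal hQ'P

variable (k K S : Type*) [Field k] [Field K] [Algebra k K] [CommRing S] [Algebra k S]

theorem isIntegral_includeRight [Algebra.IsAlgebraic k K] :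
    (Algebra.TensorProduct.includeRight : S →ₐ[k] K ⊗[k] S).toRingHom.IsIntegral :=
  RingHom.IsIntegral.trans (algebraMap S (S ⊗[k] K)) (Algebra.TensorProduct.comm k S K).toRingHom
    Algebra.IsIntegral.isIntegral
    (RingHom.isIntegral_of_surjective _ (Algebra.TensorProduct.comm k S K).surjective)

theorem flat_includeRight :
    (Algebra.TensorProduct.includeRight : S →ₐ[k] K ⊗[k] S).toRingHom.Flat :=
  RingHom.Flat.comp (f := algebraMap S (S ⊗[k] K)) (RingHom.flat_algebraMap_iff.2 inferInstance)
    (RingHom.Flat.of_bijective (Algebra.TensorProduct.comm k S K).bijective)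

variable {k S}

theorem ringKrullDim_quotient_minimalPrimes_tensorProduct [Algebra.IsAlgebraic k K]
    {e : WithBot ℕ∞} (hdim : ∀ P ∈ minimalPrimes S, ringKrullDim (S ⧸ P) = e)
    {Q : Ideal (K ⊗[k] S)} (hQ : Q ∈ minimalPrimes (K ⊗[k] S)) :
    ringKrullDim ((K ⊗[k] S) ⧸ Q) = e := by
  rw [ringKrullDim_quotient_eq_of_isIntegral (isIntegral_includeRight k K S)]
  exact hdim _ (comap_mem_minimalPrimes_of_flat (flat_includeRight k K S) hQ)

theorem finrank_submodule_baseChange (V : Submodule k S) :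
    Module.finrank K (V.baseChange K) = Module.finrank k V := by
  rw [← (Submodule.toBaseChange.toLinearEquiv K V).finrank_eq, Module.finrank_baseChange]

theorem finiteDimensional_submodule_baseChange (V : Submodule k S) [FiniteDimensional k V] :
    FiniteDimensional K (V.baseChange K) :=
  Module.Finite.equiv (Submodule.toBaseChange.toLinearEquiv K V)

theorem aeval_one_tmul_surjective {σ : Type*} {x : σ → S}
    (hx : Function.Surjective (aeval x : MvPolynomial σ k →ₐ[k] S)) :
    Function.Surjective
      (aeval (fun i ↦ (1 : K) ⊗ₜ[k] x i) : MvPolynomial σ K →ₐ[K] K ⊗[k] S) := by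
  intro t
  induction t using TensorProduct.induction_on with
  | zero => exact ⟨0, map_zero _⟩
  | add a b ha hb =>
    obtain ⟨F, rfl⟩ := ha
    obtain ⟨G, rfl⟩ := hb
    exact ⟨F + G, map_add _ _ _⟩
  | tmul c s =>
    obtain ⟨F, rfl⟩ := hx s
    refine ⟨c • map (algebraMap k K) F, ?_⟩
    have hF := comp_aeval_apply x (Algebra.TensorProduct.includeRight : S →ₐ[k] K ⊗[k] S) F
    simp only [Algebra.TensorProduct.includeRight_apply] at hF
    rw [map_smul, aeval_map_algebraMap, ← hF, TensorProduct.smul_tmul', smul_eq_mul, mul_one]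

end BaseChange

section QuotientGrading

open DirectSum

variable {ι R A : Type*} [DecidableEq ι] [AddMonoid ι] [CommRing R] [CommRing A] [Algebra R A]
  (𝒜 : ι → Submodule R A) (I : Ideal A)

/-- The grading that the quotient `A ⧸ I` inherits from a grading `𝒜` of `A`: the piece of index
`i` is the image of `𝒜 i`. -/
def quotientGrading (i : ι) : Submodule R (A ⧸ I) :=
  (𝒜 i).map (Ideal.Quotient.mkₐ R I).toLinearMap

variable [GradedAlgebra 𝒜]

instance quotientGrading_gradedMonoid : SetLike.GradedMonoid (quotientGrading 𝒜 I) where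
  one_mem := ⟨1, SetLike.GradedOne.one_mem, map_one (Ideal.Quotient.mkₐ R I)⟩
  mul_mem := by
    rintro i j _ _ ⟨a, ha, rfl⟩ ⟨b, hb, rfl⟩
    exact ⟨a * b, SetLike.GradedMul.mul_mem ha hb, map_mul (Ideal.Quotient.mkₐ R I) a b⟩

variable {I}

theorem isInternal_quotientGrading (hI : I.IsHomogeneous 𝒜) :
    IsInternal (quotientGrading 𝒜 I) := by
  let π (i : ι) : 𝒜 i →ₗ[R] quotientGrading 𝒜 I i :=
    (Ideal.Quotient.mkₐ R I).toLinearMap.submoduleMap (𝒜 i)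
  have hπ_surj : Function.Surjective (lmap π) :=
    (lmap_surjective _).2 fun i ↦ LinearMap.submoduleMap_surjective _ _
  have hπ_coe (a : ⨁ i, 𝒜 i) : DirectSum.coeAddMonoidHom (quotientGrading 𝒜 I) (lmap π a) =
      Ideal.Quotient.mk I (DirectSum.coeAddMonoidHom 𝒜 a) := by
    induction a using DirectSum.induction_on with
    | zero => simp only [map_zero]
    | of i x =>
      rw [← lof_eq_of R, lmap_lof, lof_eq_of, lof_eq_of, coeAddMonoidHom_of, coeAddMonoidHom_of]
      rfl
    | add a b ha hb => simp only [map_add, ha, hb]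
  constructor
  · refine (injective_iff_map_eq_zero _).2 fun b hb ↦ ?_
    obtain ⟨a, rfl⟩ := hπ_surj b
    have ha : (decompose 𝒜).symm a ∈ I := by
      rw [← Ideal.Quotient.eq_zero_iff_mem, ← hb, hπ_coe]
      rfl
    ext i
    have hai := hI i ha
    rw [Equiv.apply_symm_apply] at hai
    exact Ideal.Quotient.eq_zero_iff_mem.2 hai
  · intro y
    obtain ⟨f, rfl⟩ := Ideal.Quotient.mk_surjective y
    refine ⟨lmap π (decompose 𝒜 f), (hπ_coe _).trans ?_⟩
    exact congrArg (Ideal.Quotient.mk I) ((decompose 𝒜).symm_apply_apply f)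

/-- `A ⧸ I` as a graded algebra; homogeneity of `I` makes the images of the pieces independent. -/
@[reducible]
noncomputable def gradedAlgebraQuotient (hI : I.IsHomogeneous 𝒜) :
    GradedAlgebra (quotientGrading 𝒜 I) where
  toGradedMonoid := quotientGrading_gradedMonoid 𝒜 I
  toDecomposition := (isInternal_quotientGrading 𝒜 hI).chooseDecomposition

end QuotientGrading

section StandardGraded

attribute [local instance] MvPolynomial.gradedAlgebra

/-- `h` is bounded above by the Hilbert function of a free module of rank `ρ` generated in degree
`0` over a polynomial ring in `d + 1` variables, and below, from some degree `c` on, by that of a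
free module of rank `ρ` generated in degree `c`. -/
structure HasHilbertRank (h : ℕ → ℕ) (d ρ : ℕ) : Prop where
  le_mul_choose : ∀ m, h m ≤ ρ * (m + d).choose d
  exists_mul_choose_le : ∃ c, ∀ m, c ≤ m → ρ * (m - c + d).choose d ≤ h m

theorem eq_of_ringKrullDim_quotient_minimalPrimes {K T : Type*} [Field K] [CommRing T] {r e : ℕ}
    [Algebra (MvPolynomial (Fin r) K) T] [Algebra.IsIntegral (MvPolynomial (Fin r) K) T]
    (hinj : Function.Injective (algebraMap (MvPolynomial (Fin r) K) T))
    (hdim : ∀ Q ∈ minimalPrimes T, ringKrullDim (T ⧸ Q) = (e : WithBot ℕ∞)) : r = e := by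
  have h := ringKrullDim_eq_of_forall_minimalPrimes hinj hdim
  rw [MvPolynomial.ringKrullDim_of_isNoetherianRing, ringKrullDim_eq_zero_of_field, zero_add,
    Nat.card_fin] at h
  exact_mod_cast h

section InfiniteField

variable {K T : Type*} [Field K] [Infinite K] [CommRing T] [IsReduced T] [Algebra K T]
  (𝒮 : ℕ → Submodule K T) [GradedAlgebra 𝒮] [∀ m, FiniteDimensional K (𝒮 m)]

theorem exists_hasHilbertRank_of_module_finite {d : ℕ}
    [Algebra (MvPolynomial (Fin (d + 1)) K) T] [IsScalarTower K (MvPolynomial (Fin (d + 1)) K) T]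
    [SetLike.GradedSMul (homogeneousSubmodule (Fin (d + 1)) K) 𝒮]
    [Module.Finite (MvPolynomial (Fin (d + 1)) K) T]
    [Module.IsTorsionFree (MvPolynomial (Fin (d + 1)) K) T] :
    ∃ ρ, HasHilbertRank (fun m ↦ Module.finrank K (𝒮 m)) d ρ := by
  obtain ⟨ρ, ⟨b⟩⟩ := exists_genericBasis (homogeneousSubmodule (Fin (d + 1)) K) 𝒮
  refine ⟨ρ, fun m ↦ ?_, ?_⟩
  · simpa only [Fintype.card_fin] using b.finrank_le_card_mul_choose m
  · simpa only [Fintype.card_fin] using b.exists_card_mul_choose_le_finrank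

theorem exists_hasHilbertRank_of_infinite {n d : ℕ} {x : Fin n → T} (hx : ∀ i, x i ∈ 𝒮 1)
    (hgen : Function.Surjective (aeval x : MvPolynomial (Fin n) K →ₐ[K] T))
    (hdim : ∀ Q ∈ minimalPrimes T, ringKrullDim (T ⧸ Q) = ((d + 1 : ℕ) : WithBot ℕ∞)) :
    ∃ ρ, HasHilbertRank (fun m ↦ Module.finrank K (𝒮 m)) d ρ := by
  rcases subsingleton_or_nontrivial T with _ | _
  · exact ⟨0, fun m ↦ by simp [Module.finrank_zero_of_subsingleton], 0, fun m _ ↦ by simp⟩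
  obtain ⟨r, y, hy, hinj, hint⟩ := exists_noetherNormalization_linear_forms 𝒮 hx
    (RingHom.isIntegral_of_surjective _ hgen)
  let _ : Algebra (MvPolynomial (Fin r) K) T := (aeval y).toRingHom.toAlgebra
  have : IsScalarTower K (MvPolynomial (Fin r) K) T :=
    .of_algebraMap_eq fun a ↦ ((aeval y).commutes a).symm
  have : Algebra.IsIntegral (MvPolynomial (Fin r) K) T := ⟨hint⟩
  have : Algebra.FiniteType K T := .of_surjective _ hgen
  have : Algebra.FiniteType (MvPolynomial (Fin r) K) T := .of_restrictScalars_finiteType K _ _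
  have : Module.Finite (MvPolynomial (Fin r) K) T := Algebra.IsIntegral.finite
  obtain rfl : r = d + 1 := eq_of_ringKrullDim_quotient_minimalPrimes hinj hdim
  have : SetLike.GradedSMul (homogeneousSubmodule (Fin (d + 1)) K) 𝒮 :=
    ⟨fun _ _ _ _ hF hs ↦ SetLike.GradedMul.mul_mem (aeval_mem_of_isHomogeneous 𝒮 hy hF) hs⟩
  have hrank := ringKrullDim_eq_of_forall_minimalPrimes hinj hdim
  have : FiniteRingKrullDim (MvPolynomial (Fin (d + 1)) K) :=
    finiteRingKrullDim_iff_ne_bot_and_top.2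
      (hrank ▸ ⟨WithBot.natCast_ne_bot _, WithBot.coe_injective.ne (ENat.natCast_ne_top _)⟩)
  have : Module.IsTorsionFree (MvPolynomial (Fin (d + 1)) K) T :=
    isTorsionFree_of_forall_minimalPrimes_comap_eq_bot fun Q hQ ↦
      comap_eq_bot_of_ringKrullDim_le (hrank.trans (hdim Q hQ).symm).le
  exact exists_hasHilbertRank_of_module_finite 𝒮

end InfiniteField

variable {k S : Type*} [Field k] [CommRing S] [IsReduced S] [Algebra k S]
  (𝒮 : ℕ → Submodule k S) [GradedAlgebra 𝒮] [∀ m, FiniteDimensional k (𝒮 m)]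
  {n d : ℕ} {x : Fin n → S} (hx : ∀ i, x i ∈ 𝒮 1)
  (hgen : Function.Surjective (aeval x : MvPolynomial (Fin n) k →ₐ[k] S))
  (hdim : ∀ Q ∈ minimalPrimes S, ringKrullDim (S ⧸ Q) = ((d + 1 : ℕ) : WithBot ℕ∞))

include hx hgen hdim

theorem exists_hasHilbertRank_of_perfectField [PerfectField k] :
    ∃ ρ, HasHilbertRank (fun m ↦ Module.finrank k (𝒮 m)) d ρ := by
  let K := AlgebraicClosure k
  have : IsReduced (K ⊗[k] S) := isReduced_tensorProduct_of_perfectField k K S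
  have (m : ℕ) : FiniteDimensional K ((𝒮 m).baseChange K) :=
    finiteDimensional_submodule_baseChange K (𝒮 m)
  obtain ⟨ρ, hρ⟩ := exists_hasHilbertRank_of_infinite (fun m ↦ (𝒮 m).baseChange K)
    (fun i ↦ Submodule.tmul_mem_baseChange_of_mem (1 : K) (hx i))
    (aeval_one_tmul_surjective K hgen)
    (fun Q hQ ↦ ringKrullDim_quotient_minimalPrimes_tensorProduct K hdim hQ)
  simp only [finrank_submodule_baseChange] at hρ
  exact ⟨ρ, hρ⟩

theorem exists_hasHilbertRank :
    ∃ ρ, HasHilbertRank (fun m ↦ Module.finrank k (𝒮 m)) d ρ := by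
  cases finite_or_infinite k
  · exact exists_hasHilbertRank_of_perfectField 𝒮 hx hgen hdim
  · exact exists_hasHilbertRank_of_infinite 𝒮 hx hgen hdim

end StandardGraded

section HilbertPolynomial

open Filter Polynomial
open scoped Nat

theorem exists_monic_eval_eq_factorial_mul_choose (c d : ℕ) :
    ∃ Q : ℚ[X], Q.Monic ∧ Q.natDegree = d ∧
      ∀ m : ℕ, c ≤ m → Q.eval (m : ℚ) = (d ! * (m - c + d).choose d : ℕ) := by
  let L : ℚ[X] := Polynomial.X + Polynomial.C (1 - c : ℚ)
  have hdeg : L.natDegree = 1 := natDegree_X_add_C _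
  refine ⟨(ascPochhammer ℚ d).comp L,
    (monic_ascPochhammer ℚ d).comp (monic_X_add_C _) (hdeg ▸ one_ne_zero), ?_, fun m hm ↦ ?_⟩
  · rw [natDegree_comp, hdeg, ascPochhammer_natDegree, mul_one]
  · have heval : L.eval (m : ℚ) = ((m - c + 1 : ℕ) : ℚ) := by
      rw [Polynomial.eval_add, Polynomial.eval_X, Polynomial.eval_C]
      push_cast [Nat.cast_sub hm]
      ring
    rw [eval_comp, heval, ← ascPochhammer_eval_cast, ascPochhammer_nat_eq_ascFactorial,
      Nat.ascFactorial_eq_factorial_mul_choose]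

theorem HasHilbertRank.le_factorial_mul_leadingCoeff {h : ℕ → ℕ} {P : ℚ[X]} {ρ : ℕ}
    (hρ : HasHilbertRank h P.natDegree ρ) (hP : P ≠ 0)
    (hh : ∀ᶠ m : ℕ in atTop, (h m : ℚ) = P.eval (m : ℚ)) :
    (ρ : ℚ) ≤ P.natDegree ! * P.leadingCoeff := by
  obtain ⟨c, hc⟩ := hρ.exists_mul_choose_le
  obtain ⟨Q, hQ_monic, hQ_deg, hQ_eval⟩ := exists_monic_eval_eq_factorial_mul_choose c P.natDegree
  have hdeg : P.degree = Q.degree := by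
    rw [degree_eq_natDegree hP, degree_eq_natDegree hQ_monic.ne_zero, hQ_deg]
  have hlim : Tendsto (fun m : ℕ ↦ P.eval (m : ℚ) / Q.eval (m : ℚ)) atTop
      (nhds P.leadingCoeff) := by
    simpa only [hQ_monic.leadingCoeff, div_one, Function.comp_def] using
      (div_tendsto_atTop_leadingCoeff_div_of_degree_eq P Q hdeg).comp
        (tendsto_natCast_atTop_atTop (R := ℚ))
  rw [← div_le_iff₀' (by positivity)]
  refine ge_of_tendsto hlim ?_
  filter_upwards [hh, eventually_ge_atTop c] with m hm hcm
  have hchoose : 0 < (m - c + P.natDegree).choose P.natDegree :=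
    Nat.choose_pos (Nat.le_add_left _ _)
  rw [← hm, hQ_eval m hcm, div_le_div_iff₀ (by positivity) (by positivity)]
  have hle := Nat.mul_le_mul_left (P.natDegree !) (hc m hcm)
  exact_mod_cast (by linarith : ρ * (P.natDegree ! * (m - c + P.natDegree).choose P.natDegree) ≤
    h m * P.natDegree !)

variable {k : Type*} [Field k] {n : ℕ} {I : Ideal (MvPolynomial (Fin (n + 1)) k)}

theorem eventually_hilbF_eq_eval_hilbP (hne : hilbP k I ≠ 0) :
    ∀ᶠ m : ℕ in atTop, (hilbF k I m : ℚ) = (hilbP k I).eval (m : ℚ) := by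
  unfold hilbP at hne ⊢
  split_ifs at hne ⊢ with h
  · exact h.choose_spec
  · exact absurd rfl hne

theorem HasHilbertRank.le_idealDeg {ρ : ℕ}
    (hρ : HasHilbertRank (hilbF k I) (idealDim k I) ρ) (hne : hilbP k I ≠ 0) :
    ρ ≤ idealDeg k I :=
  Nat.le_floor (hρ.le_factorial_mul_leadingCoeff hne (eventually_hilbF_eq_eval_hilbP hne))

end HilbertPolynomial

section QuotientByUnmixedIdeal

attribute [local instance] MvPolynomial.gradedAlgebra

variable {k : Type*} [Field k] {n d : ℕ} {I : Ideal (MvPolynomial (Fin (n + 1)) k)}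

theorem isHomogeneous_of_isHomogeneousIdeal (hhom : IsHomogeneousIdeal I) :
    I.IsHomogeneous (homogeneousSubmodule (Fin (n + 1)) k) := by
  intro m f hf
  exact (decomposition.decompose'_apply f m).symm ▸ hhom f hf m

theorem ringKrullDim_quotient_minimalPrimes_of_isUnmixed (hunm : IsUnmixed k I d)
    {Q : Ideal (MvPolynomial (Fin (n + 1)) k ⧸ I)}
    (hQ : Q ∈ minimalPrimes (MvPolynomial (Fin (n + 1)) k ⧸ I)) :
    ringKrullDim ((MvPolynomial (Fin (n + 1)) k ⧸ I) ⧸ Q) = ((d + 1 : ℕ) : WithBot ℕ∞) := by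
  rw [ringKrullDim_quotient_eq_of_isIntegral
    (RingHom.isIntegral_of_surjective _ (Ideal.Quotient.mk_surjective (I := I)))]
  have hmin : Q.comap (Ideal.Quotient.mk I) ∈ I.minimalPrimes := by
    rw [Ideal.minimalPrimes_eq_comap]
    exact Set.mem_image_of_mem _ hQ
  have hsub := Module.associatedPrimes.minimalPrimes_annihilator_subset_associatedPrimes
    (MvPolynomial (Fin (n + 1)) k) (MvPolynomial (Fin (n + 1)) k ⧸ I)
  rw [Ideal.annihilator_quotient] at hsub
  exact hunm _ (hsub hmin)

theorem exists_hasHilbertRank_hilbF (hhom : IsHomogeneousIdeal I) (hrad : I.IsRadical)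
    (hunm : IsUnmixed k I d) : ∃ ρ, HasHilbertRank (hilbF k I) d ρ := by
  let 𝒮 := quotientGrading (homogeneousSubmodule (Fin (n + 1)) k) I
  let _ : GradedAlgebra 𝒮 := gradedAlgebraQuotient _ (isHomogeneous_of_isHomogeneousIdeal hhom)
  have (m : ℕ) : FiniteDimensional k (𝒮 m) :=
    Module.Finite.iff_fg.2 ((homogeneousSubmodule_fg _ _ m).map _)
  have : IsReduced (MvPolynomial (Fin (n + 1)) k ⧸ I) :=
    (Ideal.isRadical_iff_quotient_reduced I).1 hrad
  have hX (i : Fin (n + 1)) : Ideal.Quotient.mkₐ k I (X i) ∈ 𝒮 1 :=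
    ⟨X i, isHomogeneous_X k i, rfl⟩
  have hgen : Function.Surjective
      (aeval fun i ↦ Ideal.Quotient.mkₐ k I (X i) : MvPolynomial (Fin (n + 1)) k →ₐ[k] _) := by
    rw [← comp_aeval, aeval_X_left, AlgHom.comp_id]
    exact Ideal.Quotient.mkₐ_surjective k I
  exact exists_hasHilbertRank 𝒮 hX hgen
    fun Q hQ ↦ ringKrullDim_quotient_minimalPrimes_of_isUnmixed hunm hQ

end QuotientByUnmixedIdeal

section Binomial

theorem mul_choose_add_choose_succ_le (D m d : ℕ) :
    D * (m + d).choose d + (m + d).choose (d + 1) ≤ (m + D + d).choose (d + 1) := by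
  induction D with
  | zero => simp
  | succ D ih =>
    have hmono : (m + d).choose d ≤ (m + D + d).choose d := Nat.choose_le_choose d (by lia)
    rw [show m + (D + 1) + d = m + D + d + 1 by lia, Nat.choose_succ_succ', Nat.succ_mul]
    lia

theorem ichoose_natCast (a b : ℕ) : ichoose a b = a.choose b := by
  simp [ichoose]

theorem mul_choose_le_ichoose_sub_ichoose (D m d : ℕ) :
    ((D * (m + d).choose d : ℕ) : ℤ) ≤
      ichoose ((m : ℤ) + D + d) (d + 1) - ichoose ((m : ℤ) + d) (d + 1) := by
  rw [le_sub_iff_add_le, ← Nat.cast_add, ← Nat.cast_add, ← Nat.cast_add, ichoose_natCast,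
    ichoose_natCast]
  exact_mod_cast mul_choose_add_choose_succ_le D m d

end Binomial

end HilbertBound

open HilbertBound in
theorem hilbert_function_unmixed_radical_upper_bound_general {k : Type*} [Field k] {n d : ℕ}
    (I : Ideal (MvPolynomial (Fin (n + 1)) k)) (hhom : IsHomogeneousIdeal I) (hrad : I.IsRadical)
    (hunm : IsUnmixed k I d) (hne : hilbP k I ≠ 0) (hdim : idealDim k I = d) (m : ℕ) :
    hilbF k I m ≤ idealDeg k I * (m + d).choose d := by
  obtain ⟨ρ, hρ⟩ := exists_hasHilbertRank_hilbF hhom hrad hunm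
  calc hilbF k I m
      ≤ ρ * (m + d).choose d := hρ.le_mul_choose m
    _ ≤ idealDeg k I * (m + d).choose d :=
      Nat.mul_le_mul_right _ (HasHilbertRank.le_idealDeg (hdim ▸ hρ) hne)

/-- upper bound `h_I(m) ≤ C(m + deg I + d, d+1) − C(m + d, d+1)`
for a homogeneous unmixed radical ideal of projective dimension `d` over a
perfect field. -/
theorem hilbert_function_unmixed_radical_upper_bound {k : Type*} [Field k]
    [PerfectField k] {n d : ℕ}
    (I : Ideal (MvPolynomial (Fin (n+1)) k)) (hhom : IsHomogeneousIdeal I)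
    (hrad : I.IsRadical) (hunm : IsUnmixed k I d) (hne : hilbP k I ≠ 0)
    (hdim : idealDim k I = d) :
    ∀ m : ℕ, 1 ≤ m →
      (hilbF k I m : ℤ) ≤
        ichoose ((m : ℤ) + idealDeg k I + d) (d + 1) - ichoose ((m : ℤ) + d) (d + 1) := by
  exact fun m _ ↦ (Nat.cast_le.2 (hilbert_function_unmixed_radical_upper_bound_general I hhom hrad
    hunm hne hdim m)).trans (HilbertBound.mul_choose_le_ichoose_sub_ichoose _ m d)
end

section
/- Let k be a perfect field, I ⊆ k[x_0,...,x_n] a homogeneous unmixed radical ideal of projective dimension 0, and f a homogeneous polynomial that is a non zero divisor modulo I. Then h_{(I,f)}(m) ≤ deg I for all m ≥ 1, and h_{(I,f)}(m) = 0 for all m ≥ deg I + deg f − 1. -/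
open MvPolynomial

/-!
The Hilbert function `h` of `I` does not change under extension of scalars to the algebraic
closure, an infinite field. If `f` has degree `e > 0`, no associated prime of `I` contains all
the variables, so prime avoidance by subspaces yields a linear form `ℓ` that is a nonzerodivisor
modulo `I`, and `h(m + 1) - h(m)` is the value at `m + 1` of the Hilbert function of `(I, ℓ)`. A
Hilbert function that vanishes once vanishes from then on, so `h` increases strictly from
`h(0) ≥ 1` until it reaches its limit `deg I`; hence `h(m) = deg I` for `m ≥ deg I - 1`. The
degree-`(e + m)` piece of `(I, f)` modulo `I` is a copy of the degree-`m` piece of `k[x]/I`, so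
the Hilbert function of `(I, f)` at `e + m` is `h(e + m) - h(m)`.
-/

section HomogeneousPolynomials

variable {σ R : Type*} [CommSemiring R]

theorem homogeneousComponent_add_mul {f : MvPolynomial σ R} {e : ℕ} (hf : f.IsHomogeneous e)
    (q : MvPolynomial σ R) (m : ℕ) :
    homogeneousComponent (e + m) (f * q) = f * homogeneousComponent m q := by
  classical
  let := gradedAlgebra (σ := σ) (R := R)
  simpa only [← decomposition.decompose'_apply] using!
    DirectSum.coe_decompose_mul_add_of_left_mem (homogeneousSubmodule σ R) (b := q) (j := m) hf

theorem mem_idealOfVars_pow_of_isHomogeneous {p : MvPolynomial σ R} {m : ℕ}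
    (hp : p.IsHomogeneous m) : p ∈ idealOfVars σ R ^ m := by
  rw [mem_pow_idealOfVars_iff']
  exact fun d hd => hp.coeff_eq_zero hd.ne

theorem homogeneousSubmodule_eq_span_monomial (m : ℕ) :
    homogeneousSubmodule σ R m =
      Submodule.span R ((fun d => monomial d 1) '' {d : σ →₀ ℕ | d.degree = m}) := by
  rw [homogeneousSubmodule_eq_finsupp_supported, AddMonoidAlgebra.supported_eq_span_single]
  rfl

theorem homogeneousSubmodule_le_restrictScalars_iff {I : Ideal (MvPolynomial σ R)} {m : ℕ} :
    homogeneousSubmodule σ R m ≤ I.restrictScalars R ↔ idealOfVars σ R ^ m ≤ I := by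
  rw [homogeneousSubmodule_eq_span_monomial, pow_idealOfVars_eq_span, Ideal.span_le,
    Submodule.span_le]
  rfl

end HomogeneousPolynomials

theorem exists_isHomogeneous_one_isSMulRegular {σ K : Type*} [Finite σ] [Field K] [Infinite K]
    {J : Ideal (MvPolynomial σ K)} {f : MvPolynomial σ K} {e : ℕ} (he : e ≠ 0)
    (hf : f.IsHomogeneous e) (hreg : IsSMulRegular (MvPolynomial σ K ⧸ J) f) :
    ∃ l : MvPolynomial σ K, l.IsHomogeneous 1 ∧ IsSMulRegular (MvPolynomial σ K ⧸ J) l := by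
  have mem_iff_not_regular (g : MvPolynomial σ K) :
      (∃ P ∈ associatedPrimes (MvPolynomial σ K) (MvPolynomial σ K ⧸ J), g ∈ P) ↔
        ¬ IsSMulRegular (MvPolynomial σ K ⧸ J) g := by
    simpa using Set.ext_iff.mp (biUnion_associatedPrimes_eq_compl_regular
      (MvPolynomial σ K) (MvPolynomial σ K ⧸ J)) g
  have : Finite (associatedPrimes (MvPolynomial σ K) (MvPolynomial σ K ⧸ J)) :=
    associatedPrimes.finite _ _
  obtain ⟨⟨l, hl⟩, hl_notMem⟩ := Submodule.exists_forall_notMem_of_forall_ne_top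
    (fun P : associatedPrimes (MvPolynomial σ K) (MvPolynomial σ K ⧸ J) =>
      (P.1.restrictScalars K).comap (homogeneousSubmodule σ K 1).subtype) <| by
    rintro ⟨P, hP⟩ htop
    have linear_le : homogeneousSubmodule σ K 1 ≤ P.restrictScalars K :=
      Submodule.comap_subtype_eq_top.mp htop
    rw [homogeneousSubmodule_le_restrictScalars_iff, pow_one] at linear_le
    have hfP : f ∈ P := linear_le
      (Ideal.pow_le_self he (mem_idealOfVars_pow_of_isHomogeneous hf))
    exact (mem_iff_not_regular f).mp ⟨P, hP, hfP⟩ hreg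
  refine ⟨l, hl, ?_⟩
  by_contra hl_reg
  obtain ⟨P, hP, hlP⟩ := (mem_iff_not_regular l).mpr hl_reg
  exact hl_notMem ⟨P, hP⟩ hlP

section MapCoeff

variable {σ k K : Type*} [CommSemiring k] [CommSemiring K] [Algebra k K]

/-- The `k`-linear map `K[x] → k[x]` applying the functional `φ : K → k` to every coefficient.
Letting `φ` vary, these maps detect membership in an ideal extended from `k[x]`. -/
noncomputable def mapCoeff (φ : Module.Dual k K) : MvPolynomial σ K →ₗ[k] MvPolynomial σ k where
  toFun := AddMonoidAlgebra.map φ.toAddMonoidHom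
  map_add' := AddMonoidAlgebra.map_add _
  map_smul' c p := by
    ext d
    exact φ.map_smul c (coeff d p)

@[simp]
theorem coeff_mapCoeff (φ : Module.Dual k K) (p : MvPolynomial σ K) (d : σ →₀ ℕ) :
    coeff d (mapCoeff φ p) = φ (coeff d p) :=
  rfl

theorem mapCoeff_map_mul (φ : Module.Dual k K) (g : MvPolynomial σ k) (q : MvPolynomial σ K) :
    mapCoeff φ (map (algebraMap k K) g * q) = g * mapCoeff φ q := by
  classical
  ext d
  simp only [coeff_mapCoeff, coeff_mul, map_sum, coeff_map, ← Algebra.smul_def, map_smul,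
    smul_eq_mul]

theorem mapCoeff_smul_map (φ : Module.Dual k K) (c : K) (g : MvPolynomial σ k) :
    mapCoeff φ (c • map (algebraMap k K) g) = φ c • g := by
  ext d
  simp only [coeff_mapCoeff, coeff_smul, coeff_map, smul_eq_mul, mul_comm c, ← Algebra.smul_def,
    map_smul, mul_comm (φ c)]

theorem mapCoeff_homogeneousComponent (φ : Module.Dual k K) (q : MvPolynomial σ K) (m : ℕ) :
    mapCoeff φ (homogeneousComponent m q) = homogeneousComponent m (mapCoeff φ q) := by
  ext d
  simp only [coeff_mapCoeff, coeff_homogeneousComponent, apply_ite φ, map_zero]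

theorem exists_eq_sum_smul_map_mapCoeff {ι : Type*} (b : Module.Basis ι k K)
    (q : MvPolynomial σ K) :
    ∃ s : Finset ι, q = ∑ j ∈ s, b j • map (algebraMap k K) (mapCoeff (b.coord j) q) := by
  classical
  refine ⟨q.support.biUnion fun d => (b.repr (coeff d q)).support, ?_⟩
  ext d
  have repr_support_subset : (b.repr (coeff d q)).support ⊆
      q.support.biUnion fun d => (b.repr (coeff d q)).support := by
    by_cases hd : d ∈ q.support
    · exact Finset.subset_biUnion_of_mem (fun d => (b.repr (coeff d q)).support) hd
    · simp [notMem_support_iff.mp hd]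
  calc coeff d q = Finsupp.linearCombination k b (b.repr (coeff d q)) :=
        (b.linearCombination_repr _).symm
    _ = ∑ j ∈ q.support.biUnion fun d => (b.repr (coeff d q)).support,
          b.repr (coeff d q) j • b j :=
        Finsupp.sum_of_support_subset _ repr_support_subset _ fun _ _ => zero_smul _ _
    _ = coeff d (∑ j ∈ q.support.biUnion fun d => (b.repr (coeff d q)).support,
          b j • map (algebraMap k K) (mapCoeff (b.coord j) q)) := by
        simp only [coeff_sum, coeff_smul, coeff_map, coeff_mapCoeff, b.coord_apply, smul_eq_mul,
          mul_comm (b _), ← Algebra.smul_def]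

theorem mapCoeff_mem_of_mem_map {I : Ideal (MvPolynomial σ k)} {q : MvPolynomial σ K}
    (hq : q ∈ I.map (map (algebraMap k K))) (φ : Module.Dual k K) : mapCoeff φ q ∈ I := by
  induction hq using Submodule.closure_induction with
  | zero => simp
  | add x y _ _ hx hy => simpa using add_mem hx hy
  | smul_mem a x hx =>
    obtain ⟨g, hg, rfl⟩ := hx
    rw [smul_eq_mul, mul_comm]
    exact (mapCoeff_map_mul φ g a).symm ▸ I.mul_mem_right _ hg

theorem mem_map_iff_forall_mapCoeff_mem [Module.Free k K] {I : Ideal (MvPolynomial σ k)}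
    {q : MvPolynomial σ K} :
    q ∈ I.map (map (algebraMap k K)) ↔ ∀ φ : Module.Dual k K, mapCoeff φ q ∈ I := by
  refine ⟨mapCoeff_mem_of_mem_map, fun h => ?_⟩
  obtain ⟨s, hs⟩ := exists_eq_sum_smul_map_mapCoeff (Module.Free.chooseBasis k K) q
  rw [hs]
  refine sum_mem fun j _ => ?_
  rw [smul_eq_C_mul]
  exact Ideal.mul_mem_left _ _ (Ideal.mem_map_of_mem _ (h _))

end MapCoeff

section QuotientMap

variable {σ k K : Type*} [CommRing k] [CommRing K] [Algebra k K]

theorem isSMulRegular_quotient_map [Module.Free k K] {I : Ideal (MvPolynomial σ k)}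
    {f : MvPolynomial σ k} (hreg : IsSMulRegular (MvPolynomial σ k ⧸ I) f) :
    IsSMulRegular (MvPolynomial σ K ⧸ I.map (map (algebraMap k K))) (map (algebraMap k K) f) := by
  rw [isSMulRegular_quotient_iff_mem_of_smul_mem] at hreg ⊢
  intro g hg
  rw [mem_map_iff_forall_mapCoeff_mem] at hg ⊢
  intro φ
  have hφ := hg φ
  rw [smul_eq_mul, mapCoeff_map_mul] at hφ
  exact hreg _ hφ

theorem linearIndependent_mk_map [Module.Projective k K] {ι : Type*} {I : Ideal (MvPolynomial σ k)}
    {v : ι → MvPolynomial σ k} (hv : LinearIndependent k fun i => Ideal.Quotient.mk I (v i)) :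
    LinearIndependent K fun i =>
      Ideal.Quotient.mk (I.map (map (algebraMap k K))) (map (algebraMap k K) (v i)) := by
  rw [linearIndependent_iff'] at hv ⊢
  intro s c hc i hi
  rw [← Module.forall_dual_apply_eq_zero_iff k]
  intro φ
  have hmem : ∑ j ∈ s, c j • map (algebraMap k K) (v j) ∈ I.map (map (algebraMap k K)) := by
    rw [← Ideal.Quotient.eq_zero_iff_mem, map_sum, ← hc]
    rfl
  have hφ := mapCoeff_mem_of_mem_map hmem φ
  simp only [map_sum, mapCoeff_smul_map] at hφ
  refine hv s (fun j => φ (c j)) ?_ i hi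
  rw [← Ideal.Quotient.eq_zero_iff_mem, map_sum] at hφ
  exact hφ

end QuotientMap

section GradedPieces

variable {σ k : Type*} [CommRing k] {I J : Ideal (MvPolynomial σ k)}

/-- The degree-`m` homogeneous part `(k[x]/I)_m`, as the image of the forms of degree `m`. -/
noncomputable def gradedPiece (I : Ideal (MvPolynomial σ k)) (m : ℕ) :
    Submodule k (MvPolynomial σ k ⧸ I) :=
  (homogeneousSubmodule σ k m).map (Ideal.Quotient.mkₐ k I).toLinearMap

theorem map_factorₐ_gradedPiece (h : I ≤ J) (m : ℕ) :
    (gradedPiece I m).map (Ideal.Quotient.factorₐ k h).toLinearMap = gradedPiece J m := by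
  rw [gradedPiece, ← Submodule.map_comp]
  rfl

theorem gradedPiece_eq_bot_iff {m : ℕ} : gradedPiece I m = ⊥ ↔ idealOfVars σ k ^ m ≤ I := by
  have ker_mk : LinearMap.ker (Ideal.Quotient.mkₐ k I).toLinearMap = I.restrictScalars k := by
    ext p
    exact Ideal.Quotient.eq_zero_iff_mem
  rw [gradedPiece, ← LinearMap.le_ker_iff_map, ker_mk, homogeneousSubmodule_le_restrictScalars_iff]

instance finite_gradedPiece [Finite σ] (m : ℕ) : Module.Finite k (gradedPiece I m) :=
  Module.Finite.iff_fg.mpr ((homogeneousSubmodule_fg σ k m).map _)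

theorem gradedPiece_map_eq_span {K ι : Type*} [CommRing K] [Algebra k K] {m : ℕ}
    {v : ι → MvPolynomial σ k} (hv : ∀ i, (v i).IsHomogeneous m)
    (hspan : gradedPiece I m = Submodule.span k (Set.range fun i => Ideal.Quotient.mk I (v i))) :
    gradedPiece (I.map (map (algebraMap k K))) m = Submodule.span K (Set.range fun i =>
      Ideal.Quotient.mk (I.map (map (algebraMap k K))) (map (algebraMap k K) (v i))) := by
  set N := Submodule.span K (Set.range fun i =>
    Ideal.Quotient.mk (I.map (map (algebraMap k K))) (map (algebraMap k K) (v i)))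
  apply le_antisymm
  · rw [gradedPiece, homogeneousSubmodule_eq_span_monomial, Submodule.map_span, Submodule.span_le]
    rintro _ ⟨_, ⟨d, hd, rfl⟩, rfl⟩
    let ψ := Ideal.quotientMapₐ (I.map (map (algebraMap k K))) (mapAlgHom (Algebra.ofId k K))
      Ideal.le_comap_map
    have gradedPiece_le : gradedPiece I m ≤ (N.restrictScalars k).comap ψ.toLinearMap := by
      rw [hspan, Submodule.span_le]
      rintro _ ⟨i, rfl⟩
      exact Submodule.subset_span (Set.mem_range_self i)
    have hmem := gradedPiece_le ⟨monomial d 1, isHomogeneous_monomial 1 hd, rfl⟩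
    have hψ : ψ (Ideal.Quotient.mk I (monomial d 1)) = Ideal.Quotient.mk _ (monomial d 1) :=
      congrArg _ ((map_monomial _ _ _).trans (congrArg _ (map_one _)))
    exact hψ ▸ hmem
  · rw [Submodule.span_le]
    rintro _ ⟨i, rfl⟩
    exact ⟨_, (hv i).map _, rfl⟩

end GradedPieces

theorem finrank_map_add_finrank_inf_ker {k V W : Type*} [DivisionRing k] [AddCommGroup V]
    [Module k V] [AddCommGroup W] [Module k W] (A : Submodule k V) [FiniteDimensional k A]
    (π : V →ₗ[k] W) :
    Module.finrank k (A.map π) + Module.finrank k ↥(A ⊓ LinearMap.ker π) = Module.finrank k A := by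
  rw [← LinearMap.finrank_range_add_finrank_ker (π.domRestrict A), LinearMap.range_domRestrict,
    LinearMap.ker_domRestrict, ← Submodule.map_comap_subtype, Submodule.finrank_map_subtype_eq]

section HilbertFunction

variable {k : Type*} [Field k] {n : ℕ} {I J : Ideal (MvPolynomial (Fin (n + 1)) k)}

theorem hilbF_eq_finrank_gradedPiece (I : Ideal (MvPolynomial (Fin (n + 1)) k)) (m : ℕ) :
    hilbF k I m = Module.finrank k (gradedPiece I m) :=
  rfl

theorem hilbF_eq_zero_iff {m : ℕ} : hilbF k I m = 0 ↔ idealOfVars (Fin (n + 1)) k ^ m ≤ I := by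
  rw [hilbF_eq_finrank_gradedPiece, Submodule.finrank_eq_zero, gradedPiece_eq_bot_iff]

theorem hilbF_eq_zero_of_le {m m' : ℕ} (hm : m ≤ m') (h : hilbF k I m = 0) :
    hilbF k I m' = 0 :=
  hilbF_eq_zero_iff.mpr ((Ideal.pow_le_pow_right hm).trans (hilbF_eq_zero_iff.mp h))

theorem hilbF_anti (h : I ≤ J) (m : ℕ) : hilbF k J m ≤ hilbF k I m := by
  rw [hilbF_eq_finrank_gradedPiece, ← map_factorₐ_gradedPiece h]
  exact Submodule.finrank_map_le _ _

theorem hilbF_map {K : Type*} [Field K] [Algebra k K] (I : Ideal (MvPolynomial (Fin (n + 1)) k))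
    (m : ℕ) : hilbF K (I.map (map (algebraMap k K))) m = hilbF k I m := by
  let b := Module.finBasis k (gradedPiece I m)
  choose v hv_hom hv_mk using fun i => (b i).2
  have hv : (fun i => Ideal.Quotient.mk I (v i)) = (gradedPiece I m).subtype ∘ b := funext hv_mk
  have hspan : gradedPiece I m =
      Submodule.span k (Set.range fun i => Ideal.Quotient.mk I (v i)) := by
    rw [hv, Set.range_comp, ← Submodule.map_span, b.span_eq, Submodule.map_subtype_top]
  have hli : LinearIndependent k fun i => Ideal.Quotient.mk I (v i) := by
    rw [hv]
    exact b.linearIndependent.map' _ (Submodule.ker_subtype _)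
  rw [hilbF_eq_finrank_gradedPiece, gradedPiece_map_eq_span hv_hom hspan,
    finrank_span_eq_card (linearIndependent_mk_map hli), Fintype.card_fin,
    hilbF_eq_finrank_gradedPiece]

theorem isHomogeneousIdeal_map {K : Type*} [Field K] [Algebra k K] (hI : IsHomogeneousIdeal I) :
    IsHomogeneousIdeal (I.map (map (algebraMap k K))) := by
  intro q hq m
  rw [mem_map_iff_forall_mapCoeff_mem] at hq ⊢
  intro φ
  rw [mapCoeff_homogeneousComponent]
  exact hI _ (hq φ) m

section HypersurfaceSection

variable {e : ℕ} {f : MvPolynomial (Fin (n + 1)) k}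

theorem exists_mk_eq_mk_mul_of_mem_sup_span (hI : IsHomogeneousIdeal I) (hf : f.IsHomogeneous e)
    {m : ℕ} {p : MvPolynomial (Fin (n + 1)) k} (hp : p.IsHomogeneous (e + m))
    (hmem : p ∈ I ⊔ Ideal.span {f}) :
    ∃ q : MvPolynomial (Fin (n + 1)) k, q.IsHomogeneous m ∧
      Ideal.Quotient.mk I p = Ideal.Quotient.mk I (f * q) := by
  obtain ⟨a, ha, b, hb, rfl⟩ := Submodule.mem_sup.mp hmem
  obtain ⟨q, rfl⟩ := Ideal.mem_span_singleton.mp hb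
  refine ⟨homogeneousComponent m q, homogeneousComponent_isHomogeneous m q, ?_⟩
  rw [← homogeneousComponent_add_mul hf, ← homogeneousComponent_eq_self hp, map_add, map_add,
    Ideal.Quotient.eq_zero_iff_mem.mpr (hI a ha _), zero_add]

theorem gradedPiece_inf_ker_factorₐ (hI : IsHomogeneousIdeal I) (hf : f.IsHomogeneous e) (m : ℕ) :
    gradedPiece I (e + m) ⊓ LinearMap.ker
        (Ideal.Quotient.factorₐ k (le_sup_left : I ≤ I ⊔ Ideal.span {f})).toLinearMap =
      (gradedPiece I m).map (LinearMap.mulLeft k (Ideal.Quotient.mk I f)) := by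
  apply le_antisymm
  · rintro _ ⟨⟨p, hp, rfl⟩, hker⟩
    have hmem : p ∈ I ⊔ Ideal.span {f} := Ideal.Quotient.eq_zero_iff_mem.mp hker
    obtain ⟨q, hq, hpq⟩ := exists_mk_eq_mk_mul_of_mem_sup_span hI hf hp hmem
    exact ⟨Ideal.Quotient.mk I q, ⟨q, hq, rfl⟩, hpq.symm⟩
  · rintro _ ⟨_, ⟨q, hq, rfl⟩, rfl⟩
    exact ⟨⟨f * q, hf.mul hq, rfl⟩, Ideal.Quotient.eq_zero_iff_mem.mpr
      (Ideal.mul_mem_right _ _ (Ideal.mem_sup_right (Ideal.mem_span_singleton_self f)))⟩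

theorem hilbF_sup_span_singleton_add (hI : IsHomogeneousIdeal I) (hf : f.IsHomogeneous e)
    (hreg : IsSMulRegular (MvPolynomial (Fin (n + 1)) k ⧸ I) f) (m : ℕ) :
    hilbF k (I ⊔ Ideal.span {f}) (e + m) + hilbF k I m = hilbF k I (e + m) := by
  have hinj : Function.Injective (LinearMap.mulLeft k (Ideal.Quotient.mk I f)) := hreg
  have rank_nullity := finrank_map_add_finrank_inf_ker (gradedPiece I (e + m))
    (Ideal.Quotient.factorₐ k (le_sup_left : I ≤ I ⊔ Ideal.span {f})).toLinearMap
  rw [map_factorₐ_gradedPiece, gradedPiece_inf_ker_factorₐ hI hf,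
    ← (Submodule.equivMapOfInjective _ hinj _).finrank_eq] at rank_nullity
  exact rank_nullity

theorem exists_hilbF_succ_add_eq_hilbF_succ (hI : IsHomogeneousIdeal I) (he : e ≠ 0)
    (hf : f.IsHomogeneous e) (hreg : IsSMulRegular (MvPolynomial (Fin (n + 1)) k ⧸ I) f) :
    ∃ J : Ideal (MvPolynomial (Fin (n + 1)) (AlgebraicClosure k)),
      ∀ m, hilbF (AlgebraicClosure k) J (m + 1) + hilbF k I m = hilbF k I (m + 1) := by
  obtain ⟨l, hl, hl_reg⟩ := exists_isHomogeneous_one_isSMulRegular he (hf.map _)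
    (isSMulRegular_quotient_map (K := AlgebraicClosure k) hreg)
  refine ⟨I.map (map (algebraMap k _)) ⊔ Ideal.span {l}, fun m => ?_⟩
  have h := hilbF_sup_span_singleton_add (isHomogeneousIdeal_map hI) hl hl_reg m
  rwa [hilbF_map, hilbF_map, add_comm 1 m] at h

theorem hilbF_monotone (hI : IsHomogeneousIdeal I) (he : e ≠ 0) (hf : f.IsHomogeneous e)
    (hreg : IsSMulRegular (MvPolynomial (Fin (n + 1)) k ⧸ I) f) : Monotone (hilbF k I) := by
  obtain ⟨J, hJ⟩ := exists_hilbF_succ_add_eq_hilbF_succ hI he hf hreg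
  exact monotone_nat_of_le_succ fun m => (hJ m).symm ▸ Nat.le_add_left _ _

theorem hilbF_succ_eq_of_eq_succ (hI : IsHomogeneousIdeal I) (he : e ≠ 0) (hf : f.IsHomogeneous e)
    (hreg : IsSMulRegular (MvPolynomial (Fin (n + 1)) k ⧸ I) f) {m : ℕ}
    (hm : hilbF k I m = hilbF k I (m + 1)) : hilbF k I (m + 1) = hilbF k I (m + 2) := by
  obtain ⟨J, hJ⟩ := exists_hilbF_succ_add_eq_hilbF_succ hI he hf hreg
  have hJ_zero : hilbF (AlgebraicClosure k) J (m + 1) = 0 := by have := hJ m; lia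
  have hJ_zero_succ := hilbF_eq_zero_of_le (m + 1).le_succ hJ_zero
  have := hJ (m + 1)
  lia

end HypersurfaceSection

end HilbertFunction

theorem eq_of_monotone_of_eventually_eq {h : ℕ → ℕ} {D m : ℕ} (hmono : Monotone h)
    (hpos : h 0 ≠ 0) (hstab : ∀ i, h i = h (i + 1) → h (i + 1) = h (i + 2))
    (hD : ∀ᶠ i in Filter.atTop, h i = D) (hm : D - 1 ≤ m) : h m = D := by
  have h_pos (i : ℕ) : 0 < h i := (Nat.pos_of_ne_zero hpos).trans_le (hmono i.zero_le)
  have h_le (i : ℕ) : h i ≤ D := hmono.ge_of_tendsto (tendsto_nhds_of_eventually_eq hD) i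
  have stabilises {i : ℕ} (hi : D - 1 ≤ i) : h i - 1 = h (D - 1) - 1 :=
    Nat.stabilises_of_monotone (f := fun i => h i - 1)
      (fun i j hij => Nat.sub_le_sub_right (hmono hij) 1) (fun i => Nat.sub_le_sub_right (h_le i) 1)
      (fun i hi => by grind) hi
  obtain ⟨i, hi, hiD⟩ := (hD.and (Filter.eventually_ge_atTop (D - 1))).exists
  grind

section Degree

variable {k : Type*} [Field k] {n : ℕ} {I : Ideal (MvPolynomial (Fin (n + 1)) k)}

theorem eventually_hilbF_eq_eval_hilbP (hne : hilbP k I ≠ 0) :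
    ∀ᶠ m : ℕ in Filter.atTop, (hilbF k I m : ℚ) = (hilbP k I).eval (m : ℚ) := by
  unfold hilbP at hne ⊢
  split_ifs at hne ⊢ with h
  · exact h.choose_spec
  · exact absurd rfl hne

theorem hilbP_eq_C_idealDeg (hne : hilbP k I ≠ 0) (hdim : idealDim k I = 0) :
    hilbP k I = Polynomial.C (idealDeg k I : ℚ) := by
  obtain ⟨c, hc⟩ := Polynomial.natDegree_eq_zero.mp hdim
  obtain ⟨m, hm⟩ := (eventually_hilbF_eq_eval_hilbP hne).exists
  rw [← hc, Polynomial.eval_C] at hm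
  have hdeg : idealDeg k I = ⌊c⌋₊ := by
    rw [idealDeg, ← hc, Polynomial.natDegree_C, Polynomial.leadingCoeff_C, Nat.factorial_zero,
      Nat.cast_one, one_mul]
  rw [hdeg, ← hc, ← hm, Nat.floor_natCast]

theorem eventually_hilbF_eq_idealDeg (hne : hilbP k I ≠ 0) (hdim : idealDim k I = 0) :
    ∀ᶠ m in Filter.atTop, hilbF k I m = idealDeg k I := by
  filter_upwards [eventually_hilbF_eq_eval_hilbP hne] with m hm
  rw [hilbP_eq_C_idealDeg hne hdim, Polynomial.eval_C] at hm
  exact_mod_cast hm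

theorem idealDeg_ne_zero (hne : hilbP k I ≠ 0) (hdim : idealDim k I = 0) : idealDeg k I ≠ 0 := by
  intro h
  exact hne (by simp [hilbP_eq_C_idealDeg hne hdim, h])

theorem hilbF_zero_ne_zero (hne : hilbP k I ≠ 0) (hdim : idealDim k I = 0) : hilbF k I 0 ≠ 0 := by
  intro h
  obtain ⟨m, hm⟩ := (eventually_hilbF_eq_idealDeg hne hdim).exists
  exact idealDeg_ne_zero hne hdim (hm ▸ hilbF_eq_zero_of_le m.zero_le h)

end Degree

theorem hilbert_function_hypersurface_section_dim_zero_general {k : Type*} [Field k] {n e : ℕ}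
    {I : Ideal (MvPolynomial (Fin (n + 1)) k)} (hI : IsHomogeneousIdeal I) (hne : hilbP k I ≠ 0)
    (hdim : idealDim k I = 0) {f : MvPolynomial (Fin (n + 1)) k} (hf : f.IsHomogeneous e)
    (hreg : IsSMulRegular (MvPolynomial (Fin (n + 1)) k ⧸ I) f) :
    (∀ m, hilbF k (I ⊔ Ideal.span {f}) m ≤ idealDeg k I) ∧
      ∀ m, idealDeg k I + e - 1 ≤ m → hilbF k (I ⊔ Ideal.span {f}) m = 0 := by
  have hsection := hilbF_sup_span_singleton_add hI hf hreg
  rcases eq_or_ne e 0 with rfl | he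
  · have hzero (m : ℕ) : hilbF k (I ⊔ Ideal.span {f}) m = 0 := by
      simpa using hsection m
    simp [hzero]
  have hmono := hilbF_monotone hI he hf hreg
  have hev := eventually_hilbF_eq_idealDeg hne hdim
  have hdeg (m : ℕ) (hm : idealDeg k I - 1 ≤ m) : hilbF k I m = idealDeg k I :=
    eq_of_monotone_of_eventually_eq hmono (hilbF_zero_ne_zero hne hdim)
      (fun _ => hilbF_succ_eq_of_eq_succ hI he hf hreg) hev hm
  constructor
  · intro m
    exact (hilbF_anti le_sup_left m).trans
      (hmono.ge_of_tendsto (tendsto_nhds_of_eventually_eq hev) m)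
  · intro m hm
    have := idealDeg_ne_zero hne hdim
    obtain ⟨j, rfl⟩ := Nat.exists_eq_add_of_le (show e ≤ m by lia)
    have := hsection j
    rw [hdeg j (by lia), hdeg (e + j) (by lia)] at this
    lia

/-- Hilbert function of a hypersurface section of a dimension-`0`
homogeneous unmixed radical ideal: `h_{(I,f)}(m) ≤ deg I` for `m ≥ 1` and
`h_{(I,f)}(m) = 0` for `m ≥ deg I + deg f − 1`. -/
theorem hilbert_function_hypersurface_section_dim_zero {k : Type*} [Field k]
    [PerfectField k] {n e : ℕ}
    (I : Ideal (MvPolynomial (Fin (n+1)) k)) (hhom : IsHomogeneousIdeal I)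
    (hrad : I.IsRadical) (hunm : IsUnmixed k I 0) (hne : hilbP k I ≠ 0)
    (hdim : idealDim k I = 0)
    (f : MvPolynomial (Fin (n+1)) k) (hf : f.IsHomogeneous e) (hf0 : f ≠ 0)
    (hreg : ∀ g, f * g ∈ I → g ∈ I) :
    (∀ m : ℕ, 1 ≤ m → hilbF k (I ⊔ Ideal.span {f}) m ≤ idealDeg k I) ∧
      ∀ m : ℕ, idealDeg k I + e - 1 ≤ m → hilbF k (I ⊔ Ideal.span {f}) m = 0 := by
  exact (hilbert_function_hypersurface_section_dim_zero_general hhom hne hdim hf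
    ((isSMulRegular_quotient_iff_mem_of_smul_mem I f).mpr hreg)).imp_left fun h m _ => h m
end
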